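/- Assume additionally that 1/2 < α < 1 and set H = 1/(2α). Then for every t > 0 and every ρ > 0, with T_δ⁺ := t^{1+ρ} δ^{-2H(1+ρ)}, the Cesàro limit of the mean square displacement diverges: lim_{δ→0+} Y_δ(T_δ⁺)/T_δ⁺ = +∞. -/

import Mathlib

open MeasureTheory ProbabilityTheory Filter Set
open scoped RealInnerProductSpace

/-- The covariance matrix entries `R_{ij}(x) = ∫_{ℝᵈ} cos(k·x) R̂_{ij}(k) dk`, where
`R̂_{ij}(k) = a(|k|)|k|^{-(2α+d-2)} (δ_{ij} - k_i k_j/|k|²)`. -/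
noncomputable def covEntry (d : ℕ) (α : ℝ) (a : ℝ → ℝ)
    (x : EuclideanSpace ℝ (Fin d)) (i j : Fin d) : ℝ :=
  ∫ k : EuclideanSpace ℝ (Fin d),
    Real.cos ⟪k, x⟫ *
      (a ‖k‖ * ‖k‖ ^ (-(2 * α + (d : ℝ) - 2)) *
        ((if i = j then (1:ℝ) else 0) - k i * k j / ‖k‖ ^ 2))

section
open MeasureTheory ProbabilityTheory Filter Set
open scoped RealInnerProductSpace

/-- Euclidean space. -/
abbrev ES (d : ℕ) := EuclideanSpace ℝ (Fin d)

/-- Continuously differentiable, divergence-free fields. -/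
abbrev Fld (d : ℕ) := {f : ES d → ES d // ContDiff ℝ 1 f ∧
      ∀ x : ES d, ∑ i : Fin d, fderiv ℝ f x (EuclideanSpace.single i 1) i = 0}

namespace Fld

variable {d : ℕ}

lemma cont (f : Fld d) : Continuous f.1 := f.2.1.continuous

lemma measurable_eval : Measurable (fun p : Fld d × ES d => p.1.1 p.2) := by
  have h := measurable_uncurry_of_continuous_of_measurable
    (u := fun (x : ES d) (f : Fld d) => f.1 x) (fun f => f.cont)
    (fun x => (measurable_pi_apply x).comp measurable_subtype_coe)
  exact h.comp measurable_swap

lemma measurable_apply (x : ES d) : Measurable (fun f : Fld d => f.1 x) :=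
  (measurable_pi_apply x).comp measurable_subtype_coe

/-- translation -/
def shift (x : ES d) (f : Fld d) : Fld d :=
  ⟨fun y => f.1 (x + y), by
    have h1 : ContDiff ℝ 1 (fun y : ES d => x + y) := by fun_prop
    refine ⟨f.2.1.comp h1, fun y => ?_⟩
    have := f.2.2 (x + y)
    simpa only [fderiv_comp_add_left] using this⟩

@[simp] lemma shift_apply (x y : ES d) (f : Fld d) : (shift x f).1 y = f.1 (x + y) := rfl

lemma shift_shift (x y : ES d) (f : Fld d) : shift x (shift y f) = shift (y + x) f := by
  apply Subtype.ext
  funext z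
  simp [add_assoc]

lemma shift_zero (f : Fld d) : shift 0 f = f := by
  apply Subtype.ext
  funext z
  simp

lemma measurable_of_eval {β : Type*} [MeasurableSpace β] {g : β → Fld d}
    (h : ∀ x, Measurable (fun b => (g b).1 x)) : Measurable g :=
  Measurable.subtype_mk (measurable_pi_lambda _ h)

lemma measurable_shift : Measurable (fun p : ES d × Fld d => shift p.1 p.2) := by
  apply measurable_of_eval
  intro x
  simp only [shift_apply]
  exact measurable_eval.comp (measurable_snd.prodMk (measurable_fst.add_const x))

lemma measure_ext {μ ν : Measure (Fld d)} [IsProbabilityMeasure μ] [IsProbabilityMeasure ν]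
    (h : ∀ (N : ℕ) (x : Fin N → ES d), μ.map (fun f => fun j => f.1 (x j)) =
      ν.map (fun f => fun j => f.1 (x j))) : μ = ν := by
  have hm : Measurable (Subtype.val : Fld d → (ES d → ES d)) := measurable_subtype_coe
  have key : μ.map (Subtype.val : Fld d → (ES d → ES d)) = ν.map Subtype.val := by
    have : IsProbabilityMeasure (ν.map (Subtype.val : Fld d → (ES d → ES d))) :=
      Measure.isProbabilityMeasure_map hm.aemeasurable
    have hfin : ∀ I : Finset (ES d), IsFiniteMeasure
      ((ν.map (Subtype.val : Fld d → (ES d → ES d))).map I.restrict) := fun I => by infer_instance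
    refine IsProjectiveLimit.unique
      (P := fun I => (ν.map (Subtype.val : Fld d → (ES d → ES d))).map I.restrict) ?_ ?_
    · intro I
      beta_reduce
      rw [Measure.map_map (Finset.measurable_restrict _) hm,
        Measure.map_map (Finset.measurable_restrict _) hm]
      let e : Fin I.card ≃ I := I.equivFin.symm
      have h' := h I.card (fun j => (e j : ES d))
      have hcomp : ∀ m : Measure (Fld d), m.map (I.restrict ∘ Subtype.val) =
          (m.map (fun f => fun j => f.1 (e j : ES d))).map
            (fun (z : Fin I.card → ES d) (i : I) => z (e.symm i)) := by
        intro m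
        rw [Measure.map_map]
        · congr 1
          funext f
          funext i
          simp [Finset.restrict]
        · exact measurable_pi_lambda _ (fun i => measurable_pi_apply _)
        · exact measurable_pi_lambda _ (fun i => measurable_apply _)
      rw [hcomp μ, hcomp ν, h']
    · intro I
      rfl
  ext s hs
  obtain ⟨t, ht, rfl⟩ := hs
  rw [← Measure.map_apply hm ht, ← Measure.map_apply hm ht, key]

lemma measure_ext' {μ ν : Measure (Fld d)} [IsProbabilityMeasure μ] [IsProbabilityMeasure ν]
    (h : ∀ (N : ℕ) (x c : Fin N → ES d), μ.map (fun f => ∑ j, ⟪c j, f.1 (x j)⟫) =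
      ν.map (fun f => ∑ j, ⟪c j, f.1 (x j)⟫)) : μ = ν := by
  apply measure_ext
  intro N x
  have hm : Measurable (fun f : Fld d => fun j => f.1 (x j)) :=
    measurable_pi_lambda _ (fun i => measurable_apply _)
  have i1 : IsProbabilityMeasure (μ.map (fun f : Fld d => fun j => f.1 (x j))) :=
      Measure.isProbabilityMeasure_map hm.aemeasurable
  have i2 : IsProbabilityMeasure (ν.map (fun f : Fld d => fun j => f.1 (x j))) :=
      Measure.isProbabilityMeasure_map hm.aemeasurable
  apply Measure.ext_of_charFunDual
  funext L
  have hL : ∃ c : Fin N → ES d, ∀ z, L z = ∑ j, ⟪c j, z j⟫ := by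
    refine ⟨fun j => (InnerProductSpace.toDual ℝ (ES d)).symm
      (L.comp (ContinuousLinearMap.single ℝ (fun _ : Fin N => ES d) j)), fun z => ?_⟩
    simp only [InnerProductSpace.toDual_symm_apply]
    have : z = ∑ j, Pi.single j (z j) := (Finset.univ_sum_single z).symm
    conv_lhs => rw [this]
    rw [map_sum]
    rfl
  obtain ⟨c, hc⟩ := hL
  have h' := h N x c
  have : ∀ m : Measure (Fld d), charFunDual (m.map (fun f : Fld d => fun j => f.1 (x j))) L =
      charFun (m.map (fun f => ∑ j, ⟪c j, f.1 (x j)⟫)) 1 := by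
    intro m
    rw [charFunDual_eq_charFun_map_one, Measure.map_map L.continuous.measurable hm]
    congr 2
    funext f
    simp [hc]
  rw [this, this, h']

end Fld
end

section
open MeasureTheory ProbabilityTheory Filter Set
open scoped RealInnerProductSpace Topology

/-- one step of the Euler scheme -/
noncomputable def eul {d : ℕ} (b : ES d → ES d) (h : ℝ) (x : ES d) : ES d := x + h • b x

lemma exists_bounds {d : ℕ} {b : ES d → ES d} (hb : ContDiff ℝ 1 b) (R : ℝ) :
    ∃ L M : ℝ, 0 ≤ L ∧ 0 ≤ M ∧ (∀ x ∈ Metric.closedBall (0 : ES d) R, ‖b x‖ ≤ M ∧ ‖fderiv ℝ b x‖ ≤ L)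
      ∧ ∀ x ∈ Metric.closedBall (0 : ES d) R, ∀ y ∈ Metric.closedBall (0 : ES d) R,
        ‖b x - b y‖ ≤ L * ‖x - y‖ := by
  have hc : IsCompact (Metric.closedBall (0 : ES d) R) := isCompact_closedBall _ _
  obtain ⟨L, hL⟩ := hc.exists_bound_of_continuousOn
    (hb.continuous_fderiv (by norm_num)).continuousOn
  obtain ⟨M, hM⟩ := hc.exists_bound_of_continuousOn hb.continuous.continuousOn
  refine ⟨max L 0, max M 0, le_max_right _ _, le_max_right _ _,
    fun x hx => ⟨(hM x hx).trans (le_max_left _ _), (hL x hx).trans (le_max_left _ _)⟩, ?_⟩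
  intro x hx y hy
  exact (convex_closedBall (0 : ES d) R).norm_image_sub_le_of_norm_fderiv_le
    (fun z _ => (hb.differentiable (by norm_num)) z)
    (fun z hz => (hL z hz).trans (le_max_left _ _)) hy hx

lemma eul_conv {d : ℕ} {b : ES d → ES d} (hb : ContDiff ℝ 1 b) {S : ℝ} (hS : 0 ≤ S)
    {X : ℝ → ES d} (hX : ∀ s, 0 ≤ s → HasDerivAt X (b (X s)) s) {ε : ℝ} (hε : 0 < ε) :
    ∀ᶠ n : ℕ in atTop, ∀ j ≤ n, ‖(eul b (S / n))^[j] (X 0) - X (j * (S / n))‖ ≤ ε := by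
  have hcont : ContinuousOn X (Icc 0 S) :=
    fun s hs => (hX s hs.1).continuousAt.continuousWithinAt
  obtain ⟨ρ, hρ⟩ := isCompact_Icc.exists_bound_of_continuousOn hcont
  obtain ⟨L, M, hL, hM, hLM, hLip⟩ := exists_bounds hb (ρ + 1)
  have hin : ∀ s ∈ Icc 0 S, X s ∈ Metric.closedBall (0 : ES d) (ρ + 1) := by
    intro s hs
    rw [mem_closedBall_zero_iff]
    linarith [hρ s hs]
  have hlim : Tendsto (fun n : ℕ => (S * (L * M) * S * Real.exp (L * S)) / (n : ℝ)) atTop (𝓝 0) :=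
    tendsto_const_div_atTop_nhds_zero_nat _
  have hev := hlim.eventually (gt_mem_nhds (show (0:ℝ) < min 1 ε by positivity))
  filter_upwards [hev, eventually_gt_atTop 0] with n hn hn0
  have hnpos : (0:ℝ) < n := by exact_mod_cast hn0
  set h : ℝ := S / n with hh
  have hh0 : 0 ≤ h := by positivity
  have hnh : n * h = S := by rw [hh]; field_simp
  have hjh : ∀ j : ℕ, j ≤ n → (j : ℝ) * h ≤ S := by
    intro j hj
    rw [← hnh]
    have : (j : ℝ) ≤ n := by exact_mod_cast hj
    gcongr
  -- local truncation error
  have hvel : ∀ s ∈ Icc 0 S, ∀ u ∈ Icc 0 S, s ≤ u → ‖X u - X s‖ ≤ M * (u - s) := by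
    intro s hs u hu hsu
    refine norm_image_sub_le_of_norm_deriv_le_segment' (f := X) (f' := fun r => b (X r))
      (a := s) (b := u) ?_ ?_ u ⟨hsu, le_refl _⟩
    · intro r hr
      exact (hX r (hs.1.trans hr.1)).hasDerivWithinAt
    · intro r hr
      exact (hLM _ (hin r ⟨hs.1.trans hr.1, hr.2.le.trans hu.2⟩)).1
  have htrunc : ∀ s, 0 ≤ s → s + h ≤ S → ‖X (s + h) - X s - h • b (X s)‖ ≤ L * M * h * h := by
    intro s hs hsh
    have hsS : s ∈ Icc 0 S := ⟨hs, by linarith⟩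
    have := norm_image_sub_le_of_norm_deriv_le_segment'
      (f := fun u => X u - (u - s) • b (X s)) (f' := fun r => b (X r) - (1 : ℝ) • b (X s))
      (a := s) (b := s + h) (C := L * M * h) ?_ ?_ (s + h) ⟨by linarith, le_refl _⟩
    · simp only [add_sub_cancel_left, sub_self, zero_smul, sub_zero] at this
      rw [sub_right_comm] at this
      simpa using this
    · intro r hr
      refine HasDerivAt.hasDerivWithinAt ?_
      exact (hX r (hs.trans hr.1)).sub (((hasDerivAt_id r).sub_const s).smul_const (b (X s)))
    · intro r hr
      have hrS : r ∈ Icc 0 S := ⟨hs.trans hr.1, hr.2.le.trans hsh⟩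
      rw [one_smul]
      calc ‖b (X r) - b (X s)‖ ≤ L * ‖X r - X s‖ := hLip _ (hin r hrS) _ (hin s hsS)
        _ ≤ L * (M * (r - s)) := by gcongr; exact hvel s hsS r hrS hr.1
        _ ≤ L * (M * h) := by gcongr; linarith [hr.2]
        _ = L * M * h := by ring
  have hsmall : ∀ j : ℕ, j ≤ n → (j : ℝ) * h * (L * M * h) * (1 + h * L) ^ j ≤ min 1 ε := by
    intro j hj
    refine le_trans ?_ hn.le
    have h1 : (1 + h * L) ^ j ≤ Real.exp (L * S) := by
      calc (1 + h * L) ^ j ≤ (Real.exp (h * L)) ^ j := by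
            gcongr
            linarith [Real.add_one_le_exp (h * L)]
        _ = Real.exp (j * h * L) := by rw [← Real.exp_nat_mul]; ring_nf
        _ ≤ Real.exp (L * S) := by
            apply Real.exp_le_exp.mpr
            rw [mul_comm L S]
            gcongr
            exact hjh j hj
    calc (j : ℝ) * h * (L * M * h) * (1 + h * L) ^ j
        ≤ S * (L * M * h) * Real.exp (L * S) := by
          gcongr
          exact hjh j hj
      _ = (S * (L * M) * S * Real.exp (L * S)) / (n : ℝ) := by
          rw [hh]; ring
  have hmain : ∀ j : ℕ, j ≤ n → ‖(eul b h)^[j] (X 0) - X (j * h)‖ ≤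
      (j : ℝ) * h * (L * M * h) * (1 + h * L) ^ j := by
    intro j
    induction j with
    | zero => intro _; simp
    | succ j ih =>
      intro hj
      have hj' : j ≤ n := by omega
      have ih := ih hj'
      have hjS : (j : ℝ) * h ∈ Icc 0 S := ⟨by positivity, hjh j hj'⟩
      have hjS1 : (j : ℝ) * h + h ≤ S := by
        have := hjh (j+1) hj
        push_cast at this
        linarith
      set z := (eul b h)^[j] (X 0) with hz
      have hzin : z ∈ Metric.closedBall (0 : ES d) (ρ + 1) := by
        rw [mem_closedBall_zero_iff]
        have h1 : ‖z - X (j * h)‖ ≤ 1 := (ih.trans (hsmall j hj')).trans (min_le_left _ _)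
        have h2 := hρ _ hjS
        calc ‖z‖ = ‖(z - X (j * h)) + X (j * h)‖ := by simp
          _ ≤ _ := norm_add_le _ _
          _ ≤ ρ + 1 := by linarith
      rw [Function.iterate_succ_apply', ← hz]
      have ht := htrunc (j * h) hjS.1 hjS1
      have hl := hLip z hzin _ (hin _ hjS)
      have hcast : ((j + 1 : ℕ) : ℝ) * h = j * h + h := by push_cast; ring
      rw [hcast]
      have hdec : eul b h z - X (j * h + h) = (z - X (j * h)) + h • (b z - b (X (j * h)))
          - (X (j * h + h) - X (j * h) - h • b (X (j * h))) := by
        simp only [eul, smul_sub]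
        abel
      have hpow : 1 ≤ (1 + h * L) ^ j := one_le_pow₀ (by nlinarith)
      have hpow1 : 1 ≤ (1 + h * L) ^ (j + 1) := one_le_pow₀ (by nlinarith)
      calc ‖eul b h z - X (j * h + h)‖
          ≤ ‖z - X (j * h)‖ + ‖h • (b z - b (X (j * h)))‖
            + ‖X (j * h + h) - X (j * h) - h • b (X (j * h))‖ := by
            rw [hdec]
            exact (norm_sub_le _ _).trans (by gcongr; exact norm_add_le _ _)
        _ ≤ ‖z - X (j * h)‖ + h * (L * ‖z - X (j * h)‖) + L * M * h * h := by
            rw [norm_smul, Real.norm_of_nonneg hh0]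
            gcongr
        _ = (1 + h * L) * ‖z - X (j * h)‖ + h * (L * M * h) * 1 := by ring
        _ ≤ (1 + h * L) * ((j : ℝ) * h * (L * M * h) * (1 + h * L) ^ j)
              + h * (L * M * h) * (1 + h * L) ^ (j + 1) := by
            gcongr
        _ = (j * h + h) * (L * M * h) * (1 + h * L) ^ (j + 1) := by ring
  intro j hj
  exact ((hmain j hj).trans (hsmall j hj)).trans (min_le_right _ _)
end

section
open MeasureTheory ProbabilityTheory Filter Set
open scoped RealInnerProductSpace Topology

/-- matrix of a continuous linear map -/
noncomputable def mtx {d : ℕ} (A : ES d →L[ℝ] ES d) : Matrix (Fin d) (Fin d) ℝ :=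
  Matrix.of fun i j => A (EuclideanSpace.single j 1) i

lemma mtx_det {d : ℕ} (A : ES d →L[ℝ] ES d) : A.det = (mtx A).det := by
  rw [ContinuousLinearMap.det, ← LinearMap.det_toMatrix (EuclideanSpace.basisFun (Fin d) ℝ).toBasis]
  congr 1

lemma det_diff {d : ℕ} : Differentiable ℝ (fun A : ES d →L[ℝ] ES d => (1 + A).det) := by
  have : (fun A : ES d →L[ℝ] ES d => (1 + A).det) = fun A => ∑ σ : Equiv.Perm (Fin d),
      (((Equiv.Perm.sign σ : ℤ) : ℝ)) * ∏ i, mtx (1 + A) (σ i) i := by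
    funext A
    rw [mtx_det, Matrix.det_apply']
  rw [this]
  have hentry : ∀ i j, ContDiff ℝ 1 (fun A : ES d →L[ℝ] ES d => mtx (1 + A) i j) := by
    intro i j
    have : (fun A : ES d →L[ℝ] ES d => mtx (1 + A) i j) =
      (EuclideanSpace.proj i : ES d →L[ℝ] ℝ) ∘
        (ContinuousLinearMap.apply ℝ (ES d) (EuclideanSpace.single j (1:ℝ) : ES d)) ∘
        (fun A => 1 + A) := rfl
    rw [this]
    exact (ContinuousLinearMap.contDiff _).comp ((ContinuousLinearMap.contDiff _).comp
      (contDiff_const.add contDiff_id))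
  have : ContDiff ℝ 1 (fun A : ES d →L[ℝ] ES d => ∑ σ : Equiv.Perm (Fin d),
      (((Equiv.Perm.sign σ : ℤ) : ℝ)) * ∏ i, mtx (1 + A) (σ i) i) :=
    ContDiff.sum fun σ _ => contDiff_const.mul (contDiff_prod fun i _ => hentry _ _)
  exact this.differentiable (by norm_num)

lemma det_bound (d : ℕ) (L : ℝ) {ε : ℝ} (hε : 0 < ε) :
    ∃ η > 0, ∀ h : ℝ, 0 ≤ h → h ≤ η → ∀ A : ES d →L[ℝ] ES d, ‖A‖ ≤ L →
      ∑ i : Fin d, A (EuclideanSpace.single i 1) i = 0 → 1 - ε * h ≤ |(1 + h • A).det| := by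
  have hd := (det_diff (d := d) 0).hasFDerivAt
  set D := fderiv ℝ (fun A : ES d →L[ℝ] ES d => (1 + A).det) 0 with hD
  have hdet1 : (1 : ES d →L[ℝ] ES d).det = 1 := by
    rw [ContinuousLinearMap.det]
    exact LinearMap.det_id
  have htr : ∀ A : ES d →L[ℝ] ES d, D A = ∑ i : Fin d, A (EuclideanSpace.single i 1) i := by
    intro A
    have h1 : HasDerivAt (fun r : ℝ => (1 + r • A).det) (D A) 0 := by
      have hline : HasDerivAt (fun r : ℝ => r • A) A 0 := by
        simpa using (hasDerivAt_id (0:ℝ)).smul_const A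
      have hd' : HasFDerivAt (fun A : ES d →L[ℝ] ES d => (1 + A).det) D ((0:ℝ) • A) := by
        have h0 : (0:ℝ) • A = 0 := zero_smul ℝ A
        rw [h0]; exact hd
      exact hd'.comp_hasDerivAt (0:ℝ) hline
    have h2 : HasDerivAt (fun r : ℝ => (1 + r • A).det) ((mtx A).trace) 0 := by
      have hfun : (fun r : ℝ => (1 + r • A).det) = fun r => 1 + (mtx A).trace * r +
          ((1 + (Polynomial.X : Polynomial ℝ) • (mtx A).map Polynomial.C).det).divX.divX.eval r
            * r ^ 2 := by
        funext r
        rw [← Matrix.det_one_add_smul, mtx_det]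
        congr 1
        ext i j
        simp [mtx, Matrix.one_apply]
      rw [hfun]
      have hp := (((1 + (Polynomial.X : Polynomial ℝ) • (mtx A).map Polynomial.C).det).divX.divX).hasDerivAt 0
      have := (((hasDerivAt_id (0:ℝ)).const_mul ((mtx A).trace)).const_add 1).add
        (hp.mul (hasDerivAt_pow 2 (0:ℝ)))
      have hv : (mtx A).trace * 1 + (Polynomial.eval 0 (Polynomial.derivative
          (1 + (Polynomial.X : Polynomial ℝ) • (mtx A).map Polynomial.C).det.divX.divX) * 0 ^ 2 +
          Polynomial.eval 0 (1 + (Polynomial.X : Polynomial ℝ) •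
            (mtx A).map Polynomial.C).det.divX.divX * (((2:ℕ):ℝ) * 0 ^ (2 - 1))) =
          (mtx A).trace := by simp
      rw [hv] at this
      exact this
    rw [h1.unique h2]
    rfl
  have ho := hd.isLittleO
  rw [Asymptotics.isLittleO_iff] at ho
  have hL1 : 0 < |L| + 1 := by positivity
  have ho' := ho (show 0 < ε / (|L| + 1) by positivity)
  rw [Metric.eventually_nhds_iff] at ho'
  obtain ⟨r, hr, hr'⟩ := ho'
  refine ⟨r / (2 * (|L| + 1)), by positivity, ?_⟩
  intro h h0 hh A hA htrA
  have hAL : ‖A‖ ≤ |L| + 1 := hA.trans ((le_abs_self L).trans (by linarith))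
  have hn : ‖h • A‖ ≤ h * (|L| + 1) := by
    rw [norm_smul, Real.norm_of_nonneg h0]
    gcongr
  have hlt : dist (h • A) 0 < r := by
    rw [dist_zero_right]
    have : h * (|L| + 1) ≤ r / 2 := by
      calc h * (|L| + 1) ≤ r / (2 * (|L| + 1)) * (|L| + 1) := by gcongr
        _ = r / 2 := by field_simp
    linarith
  have hfin := hr' hlt
  simp only [add_zero, sub_zero] at hfin
  have hDA : D (h • A) = 0 := by
    rw [map_smul, htr, htrA, smul_zero]
  rw [hDA, hdet1, sub_zero, Real.norm_eq_abs] at hfin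
  have h3 : ε / (|L| + 1) * ‖h • A‖ ≤ ε * h := by
    calc ε / (|L| + 1) * ‖h • A‖ ≤ ε / (|L| + 1) * (h * (|L| + 1)) := by gcongr
      _ = ε * h := by field_simp
  have h4 := (abs_le.mp (hfin.trans h3)).1
  linarith [le_abs_self ((1 + h • A).det)]

open scoped ENNReal

lemma vol_step {d : ℕ} {b : ES d → ES d} (hb : ContDiff ℝ 1 b) {R L h q : ℝ} (hh : 0 ≤ h)
    (hLip : ∀ x ∈ Metric.closedBall (0 : ES d) R, ∀ y ∈ Metric.closedBall (0 : ES d) R,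
        ‖b x - b y‖ ≤ L * ‖x - y‖) (hL : h * L < 1)
    (hdet : ∀ x ∈ Metric.closedBall (0 : ES d) R, q ≤ |(1 + h • fderiv ℝ b x).det|)
    (u : ES d → ℝ≥0∞) :
    ENNReal.ofReal q * ∫⁻ x, (Metric.closedBall (0 : ES d) R).indicator (fun x => u (eul b h x)) x
      ≤ ∫⁻ x, u x := by
  set B := Metric.closedBall (0 : ES d) R with hB
  have hBm : MeasurableSet B := Metric.isClosed_closedBall.measurableSet
  have hinj : InjOn (eul b h) B := by
    intro x hx y hy hxy
    have h1 : x - y = - (h • (b x - b y)) := by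
      simp only [eul] at hxy
      rw [smul_sub, neg_sub, sub_eq_sub_iff_add_eq_add, hxy]
      abel
    have h2 : ‖x - y‖ ≤ h * (L * ‖x - y‖) := by
      conv_lhs => rw [h1]
      rw [norm_neg, norm_smul, Real.norm_of_nonneg hh]
      gcongr
      exact hLip x hx y hy
    have h3 : ‖x - y‖ ≤ 0 := by nlinarith [norm_nonneg (x - y)]
    exact sub_eq_zero.mp (norm_le_zero_iff.mp h3)
  have hder : ∀ x ∈ B, HasFDerivWithinAt (eul b h) (1 + h • fderiv ℝ b x) B x := by
    intro x _
    refine HasFDerivAt.hasFDerivWithinAt ?_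
    exact (hasFDerivAt_id x).add
      (((hb.differentiable (by norm_num)) x).hasFDerivAt.const_smul h)
  rw [lintegral_indicator hBm]
  calc ENNReal.ofReal q * ∫⁻ x in B, u (eul b h x)
      = ∫⁻ x in B, ENNReal.ofReal q * u (eul b h x) := by
        rw [lintegral_const_mul' _ _ ENNReal.ofReal_ne_top]
    _ ≤ ∫⁻ x in B, ENNReal.ofReal |(1 + h • fderiv ℝ b x).det| * u (eul b h x) := by
        refine setLIntegral_mono' hBm ?_
        intro x hx
        gcongr
        exact hdet x hx
    _ = ∫⁻ x in eul b h '' B, u x :=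
        (lintegral_image_eq_lintegral_abs_det_fderiv_mul volume hBm hder hinj u).symm
    _ ≤ ∫⁻ x, u x := setLIntegral_le_lintegral _ _

/-- iterated transfer -/
noncomputable def wit {d : ℕ} (b : ES d → ES d) (h R : ℝ) (u : ES d → ℝ≥0∞) : ℕ → ES d → ℝ≥0∞
  | 0 => u
  | n + 1 => (Metric.closedBall (0 : ES d) R).indicator (fun x => wit b h R u n (eul b h x))

lemma wit_ge {d : ℕ} (b : ES d → ES d) (h R : ℝ) (u : ES d → ℝ≥0∞) (n : ℕ) (x : ES d)
    (hx : ∀ j < n, (eul b h)^[j] x ∈ Metric.closedBall (0 : ES d) R) :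
    wit b h R u n x = u ((eul b h)^[n] x) := by
  induction n generalizing x with
  | zero => rfl
  | succ n ih =>
    have h0 : x ∈ Metric.closedBall (0 : ES d) R := hx 0 (Nat.succ_pos n)
    rw [wit, indicator_of_mem h0, ih, Function.iterate_succ_apply]
    intro j hj
    have := hx (j+1) (by omega)
    rwa [Function.iterate_succ_apply] at this

lemma vol_iter {d : ℕ} {b : ES d → ES d} (hb : ContDiff ℝ 1 b) {R L h q : ℝ} (hh : 0 ≤ h)
    (hLip : ∀ x ∈ Metric.closedBall (0 : ES d) R, ∀ y ∈ Metric.closedBall (0 : ES d) R,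
        ‖b x - b y‖ ≤ L * ‖x - y‖) (hL : h * L < 1)
    (hdet : ∀ x ∈ Metric.closedBall (0 : ES d) R, q ≤ |(1 + h • fderiv ℝ b x).det|)
    (u : ES d → ℝ≥0∞) (n : ℕ) :
    ENNReal.ofReal q ^ n * ∫⁻ x, wit b h R u n x ≤ ∫⁻ x, u x := by
  induction n with
  | zero => simp [wit]
  | succ n ih =>
    rw [pow_succ, mul_assoc]
    refine le_trans ?_ ih
    gcongr
    exact vol_step hb hh hLip hL hdet _

/-- The local volume estimate for the Euler scheme. -/
lemma vol_limsup {d : ℕ} {b : ES d → ES d} (hb : ContDiff ℝ 1 b)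
    (hdiv : ∀ x : ES d, ∑ i : Fin d, fderiv ℝ b x (EuclideanSpace.single i 1) i = 0)
    {S r l : ℝ} (hS : 0 ≤ S)
    (u : ES d → ℝ≥0∞) (hu1 : ∀ x, u x ≤ 1) :
    limsup (fun n : ℕ => ∫⁻ x in Metric.closedBall (0 : ES d) r,
        {x | ∀ j ≤ n, ‖(eul b (S / n))^[j] x - x‖ ≤ l}.indicator
          (fun x => u ((eul b (S / n))^[n] x)) x) atTop
      ≤ ∫⁻ x in Metric.closedBall (0 : ES d) (r + l), u x := by
  set B := Metric.closedBall (0 : ES d) (r + l) with hB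
  have hBm : MeasurableSet B := Metric.isClosed_closedBall.measurableSet
  obtain ⟨L, M, hL, hM, hLM, hLip⟩ := exists_bounds hb (r + l)
  set J := ∫⁻ x in B, u x with hJ
  set I : ℕ → ℝ≥0∞ := fun n : ℕ => ∫⁻ x in Metric.closedBall (0 : ES d) r,
        {x | ∀ j ≤ n, ‖(eul b (S / n))^[j] x - x‖ ≤ l}.indicator
          (fun x => u ((eul b (S / n))^[n] x)) x with hI
  have key : ∀ θ : ℝ, 0 < θ → θ < 1 → limsup I atTop ≤ (ENNReal.ofReal θ)⁻¹ * J := by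
    intro θ hθ hθ1
    obtain ⟨ε, hε, hεS⟩ : ∃ ε > 0, θ ≤ 1 - ε * S := by
      refine ⟨(1 - θ) / (S + 1), div_pos (by linarith) (by linarith), ?_⟩
      have : (1 - θ) / (S + 1) * S ≤ 1 - θ := by
        rw [div_mul_eq_mul_div, div_le_iff₀ (by linarith)]
        nlinarith
      linarith
    obtain ⟨η, hη, hdet⟩ := det_bound d L hε
    have hlim : Tendsto (fun n : ℕ => S / (n : ℝ)) atTop (𝓝 0) :=
      tendsto_const_div_atTop_nhds_zero_nat _
    have hlim2 : Tendsto (fun n : ℕ => S / (n : ℝ) * L) atTop (𝓝 0) := by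
      simpa using hlim.mul_const L
    have hlim3 : Tendsto (fun n : ℕ => ε * (S / (n : ℝ))) atTop (𝓝 0) := by
      simpa using hlim.const_mul ε
    refine limsup_le_of_le (by isBoundedDefault) ?_
    filter_upwards [hlim.eventually (gt_mem_nhds hη), hlim2.eventually (gt_mem_nhds one_pos),
      hlim3.eventually (gt_mem_nhds one_pos), eventually_gt_atTop 0] with n hn1 hn2 hn3 hn0
    have hnpos : (0:ℝ) < n := by exact_mod_cast hn0
    set h : ℝ := S / n with hh
    have hh0 : 0 ≤ h := by positivity
    have hnh : n * h = S := by rw [hh]; field_simp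
    have hq : θ ≤ (1 - ε * h) ^ n := by
      have hber := one_add_mul_le_pow (a := - (ε * h)) (by linarith) n
      have h1 : (1:ℝ) + n * -(ε * h) = 1 - ε * S := by rw [← hnh]; ring
      rw [h1] at hber
      rw [sub_eq_add_neg]
      linarith
    have hit := vol_iter hb hh0 hLip hn2 (q := 1 - ε * h)
      (fun x hx => hdet h hh0 hn1.le _ (hLM x hx).2 (hdiv x)) (B.indicator u) n
    rw [lintegral_indicator hBm] at hit
    have hIle : I n ≤ ∫⁻ x, wit b h (r + l) (B.indicator u) n x := by
      rw [hI]
      simp only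
      rw [← lintegral_indicator Metric.isClosed_closedBall.measurableSet]
      refine lintegral_mono ?_
      intro x
      by_cases hx : x ∈ Metric.closedBall (0 : ES d) r
      swap
      · simp [indicator_of_notMem hx]
      rw [indicator_of_mem hx]
      by_cases hx2 : x ∈ {x | ∀ j ≤ n, ‖(eul b (S / n))^[j] x - x‖ ≤ l}
      swap
      · rw [indicator_of_notMem hx2]; exact zero_le
      rw [indicator_of_mem hx2]
      have hball : ∀ j ≤ n, (eul b h)^[j] x ∈ B := by
        intro j hj
        have h1 := hx2 j hj
        rw [hB, mem_closedBall_zero_iff]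
        rw [mem_closedBall_zero_iff] at hx
        calc ‖(eul b h)^[j] x‖ = ‖x + ((eul b h)^[j] x - x)‖ := by simp
          _ ≤ _ := norm_add_le _ _
          _ ≤ r + l := add_le_add hx h1
      rw [wit_ge _ _ _ _ _ _ (fun j hj => hball j hj.le), indicator_of_mem (hball n le_rfl)]
    have hθ' : ENNReal.ofReal θ * I n ≤ J := by
      calc ENNReal.ofReal θ * I n ≤ ENNReal.ofReal (1 - ε * h) ^ n *
            ∫⁻ x, wit b h (r + l) (B.indicator u) n x := by
            gcongr
            rw [← ENNReal.ofReal_pow (by linarith)]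
            exact ENNReal.ofReal_le_ofReal hq
        _ ≤ J := hit
    rw [mul_comm, ← div_eq_mul_inv]
    rw [ENNReal.le_div_iff_mul_le]
    · rwa [mul_comm]
    · left; simpa using hθ
    · left; exact ENNReal.ofReal_ne_top
  have hJtop : J ≠ ∞ := by
    refine ne_top_of_le_ne_top (b := volume B) measure_closedBall_lt_top.ne ?_
    calc J ≤ ∫⁻ x in B, 1 := lintegral_mono hu1
      _ = volume B := by simp
  have hcont : Tendsto (fun θ : ℝ => (ENNReal.ofReal θ)⁻¹ * J) (𝓝[<] 1) (𝓝 J) := by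
    have h1 : Tendsto (fun θ : ℝ => (ENNReal.ofReal θ)⁻¹) (𝓝[<] 1) (𝓝 1) := by
      have : Tendsto (fun θ : ℝ => (ENNReal.ofReal θ)⁻¹) (𝓝 1) (𝓝 (ENNReal.ofReal 1)⁻¹) :=
        (ENNReal.continuous_ofReal.tendsto 1).inv
      simpa using this.mono_left nhdsWithin_le_nhds
    simpa using ENNReal.Tendsto.mul_const h1 (Or.inr hJtop)
  refine ge_of_tendsto hcont ?_
  have : Ioo (0:ℝ) 1 ∈ 𝓝[<] (1:ℝ) := Ioo_mem_nhdsLT one_pos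
  filter_upwards [this] with θ hθ
  exact key θ hθ.1 hθ.2
end

section
open MeasureTheory ProbabilityTheory Filter Set
open scoped RealInnerProductSpace Topology ENNReal

/-- the drift -/
noncomputable def drift {d : ℕ} (v : ES d) (δ : ℝ) (f : Fld d) (x : ES d) : ES d := v + δ • f.1 x

lemma drift_contDiff {d : ℕ} (v : ES d) (δ : ℝ) (f : Fld d) : ContDiff ℝ 1 (drift v δ f) :=
  contDiff_const.add (f.2.1.const_smul δ)

lemma drift_div {d : ℕ} (v : ES d) (δ : ℝ) (f : Fld d) (x : ES d) :
    ∑ i : Fin d, fderiv ℝ (drift v δ f) x (EuclideanSpace.single i 1) i = 0 := by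
  have h : fderiv ℝ (drift v δ f) x = δ • fderiv ℝ f.1 x :=
    (((f.2.1.differentiable (by norm_num)) x).hasFDerivAt.const_smul δ |>.const_add v).fderiv
  rw [h]
  have := f.2.2 x
  simp only [smul_apply, PiLp.smul_apply, smul_eq_mul]
  rw [← Finset.mul_sum, this, mul_zero]

lemma eul_shift {d : ℕ} (v : ES d) (δ h : ℝ) (f : Fld d) (x : ES d) (n : ℕ) (y : ES d) :
    x + (eul (drift v δ (f.shift x)) h)^[n] y = (eul (drift v δ f) h)^[n] (x + y) := by
  induction n with
  | zero => rfl
  | succ n ih =>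
    rw [Function.iterate_succ_apply', Function.iterate_succ_apply', ← ih]
    simp [eul, drift, add_assoc]

lemma eul_measurable {d : ℕ} (v : ES d) (δ h : ℝ) (n : ℕ) :
    Measurable (fun p : Fld d × ES d => (eul (drift v δ p.1) h)^[n] p.2) := by
  induction n with
  | zero => exact measurable_snd
  | succ n ih =>
    simp only [Function.iterate_succ_apply']
    have h1 : Measurable (fun p : Fld d × ES d =>
      p.1.1 ((eul (drift v δ p.1) h)^[n] p.2)) :=
      Fld.measurable_eval.comp (measurable_fst.prodMk ih)
    exact ih.add ((measurable_const.add (h1.const_smul δ)).const_smul h)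

/-- the localized Euler functional -/
noncomputable def Gfun {d : ℕ} (v : ES d) (δ S : ℝ) (φ : Fld d → ℝ≥0∞) (n : ℕ) (l : ℝ)
    (f : Fld d) (x : ES d) : ℝ≥0∞ :=
  {x | ∀ j ≤ n, ‖(eul (drift v δ f) (S / n))^[j] x - x‖ ≤ l}.indicator
          (fun x => φ (f.shift ((eul (drift v δ f) (S / n))^[n] x))) x

lemma Gfun_measurable {d : ℕ} (v : ES d) (δ S : ℝ) {φ : Fld d → ℝ≥0∞} (hφ : Measurable φ)
    (n : ℕ) (l : ℝ) : Measurable (fun p : Fld d × ES d => Gfun v δ S φ n l p.1 p.2) := by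
  have h1 : Measurable (fun p : Fld d × ES d =>
      φ (p.1.shift ((eul (drift v δ p.1) (S / n))^[n] p.2))) :=
    hφ.comp (Fld.measurable_shift.comp ((eul_measurable v δ _ n).prodMk measurable_fst))
  have h2 : MeasurableSet {p : Fld d × ES d |
      ∀ j ≤ n, ‖(eul (drift v δ p.1) (S / n))^[j] p.2 - p.2‖ ≤ l} := by
    have : {p : Fld d × ES d |
      ∀ j ≤ n, ‖(eul (drift v δ p.1) (S / n))^[j] p.2 - p.2‖ ≤ l} = ⋂ j : ℕ, ⋂ _ : j ≤ n,
      {p : Fld d × ES d | ‖(eul (drift v δ p.1) (S / n))^[j] p.2 - p.2‖ ≤ l} := by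
      ext p; simp
    rw [this]
    refine MeasurableSet.iInter fun j => MeasurableSet.iInter fun _ => ?_
    exact measurableSet_le ((eul_measurable v δ _ j).sub measurable_snd).norm measurable_const
  exact h1.indicator h2

lemma Gfun_shift {d : ℕ} (v : ES d) (δ S : ℝ) (φ : Fld d → ℝ≥0∞)
    (n : ℕ) (l : ℝ) (f : Fld d) (x : ES d) :
    Gfun v δ S φ n l (f.shift x) 0 = Gfun v δ S φ n l f x := by
  have h : ∀ j, (eul (drift v δ f) (S / n))^[j] x =
      x + (eul (drift v δ (f.shift x)) (S / n))^[j] 0 := by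
    intro j
    rw [eul_shift, add_zero]
  simp only [Gfun, indicator, mem_ofPred_eq, h, Fld.shift_shift, sub_zero, add_sub_cancel_left]

lemma Gfun_le {d : ℕ} (v : ES d) (δ S : ℝ) {φ : Fld d → ℝ≥0∞} (hφ : ∀ f, φ f ≤ 1)
    (n : ℕ) (l : ℝ) (f : Fld d) (x : ES d) : Gfun v δ S φ n l f x ≤ 1 := by
  unfold Gfun
  rw [indicator_apply]
  split_ifs
  · exact hφ _
  · exact zero_le_one

lemma Gfun_eq {d : ℕ} (v : ES d) (δ S : ℝ) (φ : Fld d → ℝ≥0∞) (n : ℕ) (l : ℝ)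
    (f : Fld d) (x : ES d) : Gfun v δ S φ n l f x =
  {x | ∀ j ≤ n, ‖(eul (drift v δ f) (S / n))^[j] x - x‖ ≤ l}.indicator
          (fun x => φ (f.shift ((eul (drift v δ f) (S / n))^[n] x))) x := rfl

attribute [irreducible] Gfun

lemma Gfun_measurable_fix {d : ℕ} (v : ES d) (δ S : ℝ) {φ : Fld d → ℝ≥0∞} (hφ : Measurable φ)
    (n : ℕ) (l : ℝ) (x : ES d) : Measurable (fun f : Fld d => Gfun v δ S φ n l f x) :=
  Measurable.of_uncurry_right (f := fun f x => Gfun v δ S φ n l f x) (Gfun_measurable v δ S hφ n l)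

lemma Gfun_measurable_zero {d : ℕ} (v : ES d) (δ S : ℝ) {φ : Fld d → ℝ≥0∞} (hφ : Measurable φ)
    (n : ℕ) (l : ℝ) : Measurable (fun f : Fld d => Gfun v δ S φ n l f 0) :=
  Gfun_measurable_fix v δ S hφ n l 0
end

section
open MeasureTheory ProbabilityTheory Filter Set
open scoped RealInnerProductSpace Topology ENNReal

lemma ball_ratio {d : ℕ} (l : ℝ) (hl : 0 ≤ l) :
    Tendsto (fun n : ℕ => volume (Metric.closedBall (0 : ES d) ((n:ℝ) + 1 + l)) /
      volume (Metric.closedBall (0 : ES d) ((n:ℝ) + 1))) atTop (𝓝 1) := by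
  have h1 : ∀ n : ℕ, volume (Metric.closedBall (0 : ES d) ((n:ℝ) + 1 + l)) /
      volume (Metric.closedBall (0 : ES d) ((n:ℝ) + 1)) =
      ENNReal.ofReal ((1 + l * (1 / ((n:ℝ) + 1))) ^ d) := by
    intro n
    have hn : (0:ℝ) < (n:ℝ) + 1 := by positivity
    have hv : volume (Metric.ball (0 : ES d) 1) ≠ 0 := (Metric.measure_ball_pos _ _ one_pos).ne'
    have hv' : volume (Metric.ball (0 : ES d) 1) ≠ ∞ := measure_ball_lt_top.ne
    rw [Measure.addHaar_closedBall _ _ (by positivity), Measure.addHaar_closedBall _ _ (by positivity),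
      ENNReal.mul_div_mul_right _ _ hv hv', ← ENNReal.ofReal_div_of_pos (by positivity), ← div_pow]
    simp only [finrank_euclideanSpace, Fintype.card_fin]
    congr 2
    field_simp
  simp_rw [h1]
  have h2 : Tendsto (fun n : ℕ => (1 + l * (1 / ((n:ℝ) + 1))) ^ d) atTop (𝓝 ((1 + l * 0) ^ d)) :=
    ((tendsto_one_div_add_atTop_nhds_zero_nat.const_mul l).const_add 1).pow d
  have h3 := ENNReal.tendsto_ofReal h2
  simpa using h3

lemma Gfun_int {d : ℕ} (v : ES d) (δ : ℝ) {S : ℝ} (hS : 0 ≤ S)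
    (μ : Measure (Fld d)) [IsProbabilityMeasure μ] (hμ : ∀ x, μ.map (Fld.shift x) = μ)
    {φ : Fld d → ℝ≥0∞} (hφ : Measurable φ) (hφ1 : ∀ f, φ f ≤ 1) (l : ℝ) (hl : 0 ≤ l) :
    liminf (fun n => ∫⁻ f, Gfun v δ S φ n l f 0 ∂μ) atTop ≤ ∫⁻ f, φ f ∂μ := by
  have hsm : ∀ x : ES d, Measurable (Fld.shift x) := fun x =>
    Fld.measurable_shift.comp (measurable_const.prodMk measurable_id)
  set c : ℕ → ℝ≥0∞ := fun n => ∫⁻ f, Gfun v δ S φ n l f 0 ∂μ with hc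
  have hGm : ∀ n, Measurable (fun p : Fld d × ES d => Gfun v δ S φ n l p.1 p.2) :=
    fun n => Gfun_measurable v δ S hφ n l
  have hcx : ∀ n x, ∫⁻ f, Gfun v δ S φ n l f x ∂μ = c n := by
    intro n x
    simp_rw [← Gfun_shift v δ S φ n l _ x]
    have := lintegral_map (μ := μ) (f := fun f => Gfun v δ S φ n l f 0) (g := Fld.shift x)
      (Gfun_measurable_zero v δ S hφ n l) (hsm x)
    rw [← this, hμ x]
  have hφx : ∀ x, ∫⁻ f, φ (f.shift x) ∂μ = ∫⁻ f, φ f ∂μ := by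
    intro x
    have := lintegral_map (μ := μ) hφ (hsm x)
    rw [← this, hμ x]
  have key : ∀ r : ℝ, 0 < r → liminf c atTop * volume (Metric.closedBall (0 : ES d) r) ≤
      (∫⁻ f, φ f ∂μ) * volume (Metric.closedBall (0 : ES d) (r + l)) := by
    intro r hr
    have hvol : volume (Metric.closedBall (0 : ES d) r) ≠ ∞ := measure_closedBall_lt_top.ne
    have e1 : ∀ n, c n * volume (Metric.closedBall (0 : ES d) r) =
        ∫⁻ f, (∫⁻ x in Metric.closedBall (0 : ES d) r, Gfun v δ S φ n l f x) ∂μ := by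
      intro n
      rw [lintegral_lintegral_swap (hGm n).aemeasurable]
      simp_rw [hcx]
      simp
    calc liminf c atTop * volume (Metric.closedBall (0 : ES d) r)
        ≤ limsup c atTop * volume (Metric.closedBall (0 : ES d) r) := by
          gcongr; exact liminf_le_limsup
      _ = limsup (fun n => c n * volume (Metric.closedBall (0 : ES d) r)) atTop := by
          rw [mul_comm, ← ENNReal.limsup_const_mul_of_ne_top hvol]
          simp_rw [mul_comm]
      _ = limsup (fun n => ∫⁻ f, (∫⁻ x in Metric.closedBall (0 : ES d) r,
            Gfun v δ S φ n l f x) ∂μ) atTop := by simp_rw [e1]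
      _ ≤ ∫⁻ f, limsup (fun n => ∫⁻ x in Metric.closedBall (0 : ES d) r,
            Gfun v δ S φ n l f x) atTop ∂μ := by
          refine limsup_lintegral_le (fun _ => volume (Metric.closedBall (0 : ES d) r)) ?_ ?_ ?_
          · intro n
            exact (hGm n).lintegral_prod_right'
          · intro n
            refine ae_of_all _ fun f => ?_
            calc ∫⁻ x in Metric.closedBall (0 : ES d) r, Gfun v δ S φ n l f x
                ≤ ∫⁻ x in Metric.closedBall (0 : ES d) r, 1 :=
                  lintegral_mono fun x => Gfun_le v δ S hφ1 n l f x
              _ = _ := by simp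
          · simpa using hvol
      _ ≤ ∫⁻ f, (∫⁻ x in Metric.closedBall (0 : ES d) (r + l), φ (f.shift x)) ∂μ := by
          refine lintegral_mono fun f => ?_
          simp only [Gfun_eq]
          exact vol_limsup (drift_contDiff v δ f) (drift_div v δ f) hS (fun x => φ (f.shift x))
            (fun x => hφ1 _)
      _ = (∫⁻ f, φ f ∂μ) * volume (Metric.closedBall (0 : ES d) (r + l)) := by
          rw [lintegral_lintegral_swap]
          · simp_rw [hφx]
            simp
          · have := hφ.comp ((Fld.measurable_shift (d := d)).comp measurable_swap)
            exact this.aemeasurable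
  have hfin : ∫⁻ f, φ f ∂μ ≠ ∞ := by
    refine ne_top_of_le_ne_top ENNReal.one_ne_top ?_
    calc ∫⁻ f, φ f ∂μ ≤ ∫⁻ f, 1 ∂μ := lintegral_mono hφ1
      _ = 1 := by simp
  have hlim : Tendsto (fun n : ℕ => (∫⁻ f, φ f ∂μ) *
      (volume (Metric.closedBall (0 : ES d) ((n:ℝ) + 1 + l)) /
      volume (Metric.closedBall (0 : ES d) ((n:ℝ) + 1)))) atTop (𝓝 ((∫⁻ f, φ f ∂μ) * 1)) :=
    ENNReal.Tendsto.const_mul (ball_ratio l hl) (Or.inr hfin)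
  rw [mul_one] at hlim
  refine ge_of_tendsto hlim (Eventually.of_forall fun n => ?_)
  have hn : (0:ℝ) < (n:ℝ) + 1 := by positivity
  rw [← mul_div_assoc, ENNReal.le_div_iff_mul_le]
  · exact key _ hn
  · left; exact (Metric.measure_closedBall_pos _ _ hn).ne'
  · left; exact measure_closedBall_lt_top.ne

lemma lagr_le {d : ℕ} (v : ES d) (δ : ℝ) {S : ℝ} (hS : 0 ≤ S)
    {Ω : Type*} [MeasurableSpace Ω] (P : Measure Ω) [IsProbabilityMeasure P]
    (Fl : Ω → Fld d) (hFl : Measurable Fl)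
    (hμ : ∀ x, (P.map Fl).map (Fld.shift x) = P.map Fl)
    (X : Ω → ℝ → ES d)
    (hsol : ∀ᵐ ω ∂P, X ω 0 = 0 ∧ ∀ s, 0 ≤ s → HasDerivAt (X ω) (drift v δ (Fl ω) (X ω s)) s)
    {φ : Fld d → ℝ≥0∞} (hφ : Measurable φ) (hφ1 : ∀ f, φ f ≤ 1)
    (hφc : ∀ f : Fld d, Continuous (fun x => φ (f.shift x))) :
    ∫⁻ ω, φ ((Fl ω).shift (X ω S)) ∂P ≤ ∫⁻ f, φ f ∂(P.map Fl) := by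
  have : IsProbabilityMeasure (P.map Fl) := Measure.isProbabilityMeasure_map hFl.aemeasurable
  have hGm : ∀ n (l : ℕ), Measurable (fun ω => Gfun v δ S φ n l (Fl ω) 0) :=
    fun n l => (Gfun_measurable_zero v δ S hφ n l).comp hFl
  have hpt : ∀ᵐ ω ∂P, φ ((Fl ω).shift (X ω S)) ≤
      liminf (fun l : ℕ => liminf (fun n => Gfun v δ S φ n l (Fl ω) 0) atTop) atTop := by
    filter_upwards [hsol] with ω hω
    obtain ⟨h0, hder⟩ := hω
    have hcont : ContinuousOn (X ω) (Icc 0 S) :=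
      fun s hs => (hder s hs.1).continuousAt.continuousWithinAt
    obtain ⟨ρ, hρ⟩ := isCompact_Icc.exists_bound_of_continuousOn hcont
    have hconv : ∀ {ε : ℝ}, 0 < ε → ∀ᶠ n : ℕ in atTop, ∀ j ≤ n,
        ‖(eul (drift v δ (Fl ω)) (S / n))^[j] 0 - X ω (j * (S / n))‖ ≤ ε := by
      intro ε hε
      have := eul_conv (drift_contDiff v δ (Fl ω)) hS hder hε
      rwa [h0] at this
    have hend : Tendsto (fun n : ℕ => (eul (drift v δ (Fl ω)) (S / n))^[n] 0) atTop
        (𝓝 (X ω S)) := by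
      rw [Metric.tendsto_nhds]
      intro ε hε
      filter_upwards [hconv (half_pos hε), eventually_gt_atTop 0] with n hn hn0
      have hnpos : (n:ℝ) ≠ 0 := by positivity
      have h1 := hn n le_rfl
      rw [show (n:ℝ) * (S / n) = S by field_simp] at h1
      rw [dist_eq_norm]
      linarith
    have hφlim : Tendsto (fun n : ℕ => φ ((Fl ω).shift ((eul (drift v δ (Fl ω)) (S / n))^[n] 0)))
        atTop (𝓝 (φ ((Fl ω).shift (X ω S)))) :=
      ((hφc (Fl ω)).tendsto _).comp hend
    refine le_liminf_of_le (by isBoundedDefault) ?_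
    filter_upwards [eventually_ge_atTop (⌈ρ + 1⌉₊)] with l hl
    have hl' : ρ + 1 ≤ (l:ℝ) := Nat.ceil_le.mp hl
    refine le_of_eq ?_
    symm
    apply Tendsto.liminf_eq
    refine hφlim.congr' ?_
    filter_upwards [hconv one_pos, eventually_gt_atTop 0] with n hn hn0
    have hnpos : (0:ℝ) < n := by exact_mod_cast hn0
    rw [Gfun_eq, indicator_of_mem]
    intro j hj
    have h1 := hn j hj
    have hjn : (j:ℝ) ≤ n := by exact_mod_cast hj
    have h2 := hρ (j * (S / n)) ⟨by positivity, by
      rw [← mul_div_assoc, div_le_iff₀ hnpos, mul_comm S]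
      gcongr⟩
    rw [sub_zero]
    calc ‖(eul (drift v δ (Fl ω)) (S / n))^[j] 0‖
        = ‖((eul (drift v δ (Fl ω)) (S / n))^[j] 0 - X ω (j * (S / n))) + X ω (j * (S / n))‖ := by
          simp
      _ ≤ _ := norm_add_le _ _
      _ ≤ l := by linarith
  calc ∫⁻ ω, φ ((Fl ω).shift (X ω S)) ∂P
      ≤ ∫⁻ ω, liminf (fun l : ℕ => liminf (fun n => Gfun v δ S φ n l (Fl ω) 0) atTop) atTop ∂P :=
        lintegral_mono_ae hpt
    _ ≤ liminf (fun l : ℕ => ∫⁻ ω, liminf (fun n => Gfun v δ S φ n l (Fl ω) 0) atTop ∂P) atTop :=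
        lintegral_liminf_le fun l => Measurable.liminf fun n => hGm n l
    _ ≤ liminf (fun l : ℕ => liminf (fun n => ∫⁻ ω, Gfun v δ S φ n l (Fl ω) 0 ∂P) atTop) atTop := by
        refine liminf_le_liminf (Eventually.of_forall fun l => ?_)
        exact lintegral_liminf_le fun n => hGm n l
    _ ≤ liminf (fun _ : ℕ => ∫⁻ f, φ f ∂(P.map Fl)) atTop := by
        refine liminf_le_liminf (Eventually.of_forall fun l => ?_)
        have h1 := Gfun_int v δ hS (P.map Fl) hμ hφ hφ1 (l:ℝ) (by positivity)
        refine le_trans (le_of_eq ?_) h1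
        congr 1
        funext n
        rw [lintegral_map (Gfun_measurable_zero v δ S hφ n l) hFl]
    _ = _ := by simp

/-- Invariance of the environment seen from the particle. -/
lemma lagr_eq {d : ℕ} (v : ES d) (δ : ℝ) {S : ℝ} (hS : 0 ≤ S)
    {Ω : Type*} [MeasurableSpace Ω] (P : Measure Ω) [IsProbabilityMeasure P]
    (Fl : Ω → Fld d) (hFl : Measurable Fl)
    (hμ : ∀ x, (P.map Fl).map (Fld.shift x) = P.map Fl)
    (X : Ω → ℝ → ES d) (hX : Measurable (fun ω => X ω S))
    (hsol : ∀ᵐ ω ∂P, X ω 0 = 0 ∧ ∀ s, 0 ≤ s → HasDerivAt (X ω) (drift v δ (Fl ω) (X ω s)) s) :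
    P.map (fun ω => (Fl ω).shift (X ω S)) = P.map Fl := by
  have hm : Measurable (fun ω => (Fl ω).shift (X ω S)) :=
    Fld.measurable_shift.comp (hX.prodMk hFl)
  have i1 : IsProbabilityMeasure (P.map Fl) := Measure.isProbabilityMeasure_map hFl.aemeasurable
  have i2 : IsProbabilityMeasure (P.map (fun ω => (Fl ω).shift (X ω S))) :=
    Measure.isProbabilityMeasure_map hm.aemeasurable
  apply Fld.measure_ext
  intro N x
  have he : Measurable (fun f : Fld d => fun j => f.1 (x j)) :=
    measurable_pi_lambda _ (fun i => Fld.measurable_apply _)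
  have i3 : IsProbabilityMeasure ((P.map Fl).map (fun f : Fld d => fun j => f.1 (x j))) :=
    Measure.isProbabilityMeasure_map he.aemeasurable
  have i4 : IsProbabilityMeasure ((P.map (fun ω => (Fl ω).shift (X ω S))).map
      (fun f : Fld d => fun j => f.1 (x j))) :=
    Measure.isProbabilityMeasure_map he.aemeasurable
  have hle : ∀ g : (Fin N → ES d) → ℝ≥0∞, Continuous g → (∀ z, g z ≤ 1) →
      ∫⁻ z, g z ∂((P.map (fun ω => (Fl ω).shift (X ω S))).map (fun f => fun j => f.1 (x j))) ≤
      ∫⁻ z, g z ∂((P.map Fl).map (fun f => fun j => f.1 (x j))) := by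
    intro g hg hg1
    have hge : Measurable (fun f : Fld d => g (fun j => f.1 (x j))) := hg.measurable.comp he
    rw [lintegral_map hg.measurable he, lintegral_map hg.measurable he,
      lintegral_map hge hm]
    refine lagr_le v δ hS P Fl hFl hμ X hsol (φ := fun f => g (fun j => f.1 (x j)))
      (hg.measurable.comp he) (fun f => hg1 _) ?_
    intro f
    refine hg.comp (continuous_pi fun j => ?_)
    exact f.cont.comp (continuous_id.add continuous_const)
  apply ext_of_forall_lintegral_eq_of_IsFiniteMeasure
  intro g
  -- normalise
  obtain ⟨C, hC0, hC⟩ : ∃ C : NNReal, 0 < C ∧ ∀ z, g z ≤ C := by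
    refine ⟨nndist g 0 + 1, by positivity, fun z => ?_⟩
    have h1 := BoundedContinuousFunction.dist_coe_le_dist (f := g) (g := 0) z
    have h2 : (g z : ℝ) ≤ dist g 0 := by
      refine le_trans ?_ h1
      simp [NNReal.dist_eq]
    rw [← NNReal.coe_le_coe]
    push_cast
    linarith
  set m1 := (P.map (fun ω => (Fl ω).shift (X ω S))).map (fun f => fun j => f.1 (x j)) with hm1
  set m2 := (P.map Fl).map (fun f => fun j => f.1 (x j)) with hm2
  have hgc : Continuous (fun z => ((g z / C : NNReal) : ℝ≥0∞)) :=
    ENNReal.continuous_coe.comp (g.continuous.div_const C)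
  have hg1 : ∀ z, ((g z / C : NNReal) : ℝ≥0∞) ≤ 1 := by
    intro z
    rw [ENNReal.coe_le_one_iff]
    exact div_le_one_of_le₀ (hC z) (by positivity)
  have hgc' : Continuous (fun z => ((1 - g z / C : NNReal) : ℝ≥0∞)) :=
    ENNReal.continuous_coe.comp (continuous_const.sub (g.continuous.div_const C))
  have hA := hle _ hgc hg1
  have hB := hle _ hgc' (fun z => by rw [ENNReal.coe_le_one_iff]; exact tsub_le_self)
  have hsum : ∀ m : Measure (Fin N → ES d), IsProbabilityMeasure m →
      ∫⁻ z, ((g z / C : NNReal) : ℝ≥0∞) ∂m + ∫⁻ z, ((1 - g z / C : NNReal) : ℝ≥0∞) ∂m = 1 := by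
    intro m hm
    rw [← lintegral_add_left hgc.measurable]
    have : ∀ z, ((g z / C : NNReal) : ℝ≥0∞) + ((1 - g z / C : NNReal) : ℝ≥0∞) = 1 := by
      intro z
      rw [← ENNReal.coe_add, add_tsub_cancel_of_le]
      · rfl
      · exact div_le_one_of_le₀ (hC z) (by positivity)
    simp_rw [this]
    simp
  have hEq : ∫⁻ z, ((g z / C : NNReal) : ℝ≥0∞) ∂m1 = ∫⁻ z, ((g z / C : NNReal) : ℝ≥0∞) ∂m2 := by
    refine le_antisymm hA ?_
    have s1 := hsum m1 i4
    have s2 := hsum m2 i3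
    have hBfin : ∫⁻ z, ((1 - g z / C : NNReal) : ℝ≥0∞) ∂m2 ≠ ∞ := by
      intro h
      rw [h] at s2
      simp at s2
    have : ∫⁻ z, ((g z / C : NNReal) : ℝ≥0∞) ∂m2 + ∫⁻ z, ((1 - g z / C : NNReal) : ℝ≥0∞) ∂m2 ≤
      ∫⁻ z, ((g z / C : NNReal) : ℝ≥0∞) ∂m1 + ∫⁻ z, ((1 - g z / C : NNReal) : ℝ≥0∞) ∂m2 := by
      rw [s2, ← s1]
      gcongr
    exact (ENNReal.add_le_add_iff_right hBfin).mp this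
  have hfac : ∀ z, (g z : ℝ≥0∞) = C * ((g z / C : NNReal) : ℝ≥0∞) := by
    intro z
    rw [← ENNReal.coe_mul, mul_div_cancel₀ _ hC0.ne']
  simp_rw [hfac]
  rw [lintegral_const_mul _ hgc.measurable, lintegral_const_mul _ hgc.measurable, hEq]
end

section
open MeasureTheory ProbabilityTheory Filter Set
open scoped RealInnerProductSpace Topology ENNReal

/-- The Gaussian hypothesis on the law of the field. -/
def GaussLaw (d : ℕ) (α : ℝ) (a : ℝ → ℝ) (μ : Measure (Fld d)) : Prop :=
  ∀ (N : ℕ) (x c : Fin N → ES d),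
      Measure.map (fun f : Fld d => ∑ j : Fin N, ⟪c j, f.1 (x j)⟫) μ =
        gaussianReal 0 (Real.toNNReal (∑ j : Fin N, ∑ l : Fin N,
          ∑ i : Fin d, ∑ i' : Fin d,
            c j i * covEntry d α a (x j - x l) i i' * c l i'))

lemma exists_lift {d : ℕ} {α : ℝ} {a : ℝ → ℝ} 
    {Ω : Type*} [MeasurableSpace Ω] (P : Measure Ω) [IsProbabilityMeasure P]
    (F : Ω → ES d → ES d)
    (hF_meas : Measurable (Function.uncurry F))
    (hF_reg : ∀ᵐ ω ∂P, ContDiff ℝ 1 (F ω) ∧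
      ∀ x : ES d, ∑ i : Fin d, fderiv ℝ (F ω) x (EuclideanSpace.single i 1) i = 0)
    (hF_gauss : ∀ (N : ℕ) (x c : Fin N → ES d),
      Measure.map (fun ω => ∑ j : Fin N, ⟪c j, F ω (x j)⟫) P =
        gaussianReal 0 (Real.toNNReal (∑ j : Fin N, ∑ l : Fin N,
          ∑ i : Fin d, ∑ i' : Fin d,
            c j i * covEntry d α a (x j - x l) i i' * c l i'))) :
    ∃ Fl : Ω → Fld d, Measurable Fl ∧ (∀ᵐ ω ∂P, (Fl ω).1 = F ω) ∧
      GaussLaw d α a (P.map Fl) := by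
  classical
  obtain ⟨s, hs, hsm, hP⟩ : ∃ s : Set Ω, (∀ ω ∈ s, ContDiff ℝ 1 (F ω) ∧
      ∀ x : ES d, ∑ i : Fin d, fderiv ℝ (F ω) x (EuclideanSpace.single i 1) i = 0) ∧
      MeasurableSet s ∧ s ∈ ae P := by
    obtain ⟨s, hs, h⟩ := eventually_iff_exists_mem.mp hF_reg
    refine ⟨(toMeasurable P sᶜ)ᶜ, ?_, (measurableSet_toMeasurable _ _).compl, ?_⟩
    · intro ω hω
      refine h ω ?_
      by_contra hc
      exact hω (subset_toMeasurable _ _ hc)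
    · rw [mem_ae_iff, compl_compl, measure_toMeasurable]
      exact hs
  have hzero : ContDiff ℝ 1 (fun _ : ES d => (0 : ES d)) ∧
      ∀ x : ES d, ∑ i : Fin d, fderiv ℝ (fun _ : ES d => (0 : ES d)) x
        (EuclideanSpace.single i 1) i = 0 := by
    refine ⟨contDiff_const, fun x => ?_⟩
    simp
  have hgood : ∀ ω, ContDiff ℝ 1 (if ω ∈ s then F ω else fun _ => 0) ∧
      ∀ x : ES d, ∑ i : Fin d, fderiv ℝ (if ω ∈ s then F ω else fun _ => 0) x
        (EuclideanSpace.single i 1) i = 0 := by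
    intro ω
    split_ifs with h
    · exact hs ω h
    · exact hzero
  let Fl : Ω → Fld d := fun ω => ⟨if ω ∈ s then F ω else fun _ => 0, hgood ω⟩
  have hFl : Measurable Fl := by
    apply Fld.measurable_of_eval
    intro x
    have : (fun ω => (Fl ω).1 x) = fun ω => if ω ∈ s then F ω x else 0 := by
      funext ω
      simp only [Fl]
      split_ifs <;> rfl
    rw [this]
    refine Measurable.ite hsm ?_ measurable_const
    exact hF_meas.comp (measurable_id.prodMk measurable_const)
  have hae : ∀ᵐ ω ∂P, (Fl ω).1 = F ω := by
    filter_upwards [hP] with ω hω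
    simp [Fl, hω]
  refine ⟨Fl, hFl, hae, ?_⟩
  intro N x c
  have hm : Measurable (fun f : Fld d => ∑ j : Fin N, ⟪c j, f.1 (x j)⟫) :=
    Finset.measurable_sum _ fun j _ => (Fld.measurable_apply (x j)).const_inner
  rw [Measure.map_map hm hFl, ← hF_gauss N x c]
  apply Measure.map_congr
  filter_upwards [hae] with ω hω
  simp [hω]

lemma GaussLaw.shift_inv {d : ℕ} {α : ℝ} {a : ℝ → ℝ} {μ : Measure (Fld d)}
    [IsProbabilityMeasure μ] (h : GaussLaw d α a μ) (x : ES d) : μ.map (Fld.shift x) = μ := by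
  have hsm : Measurable (Fld.shift x) :=
    Fld.measurable_shift.comp (measurable_const.prodMk measurable_id)
  have : IsProbabilityMeasure (μ.map (Fld.shift x)) :=
    Measure.isProbabilityMeasure_map hsm.aemeasurable
  apply Fld.measure_ext'
  intro N y c
  have hm : Measurable (fun f : Fld d => ∑ j : Fin N, ⟪c j, f.1 (y j)⟫) :=
    Finset.measurable_sum _ fun j _ => (Fld.measurable_apply (y j)).const_inner
  rw [Measure.map_map hm hsm, h N y c]
  have := h N (fun j => x + y j) c
  simp only [add_sub_add_left_eq_sub] at this
  rw [← this]
  rfl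
end

section
open MeasureTheory ProbabilityTheory Filter Set
open scoped RealInnerProductSpace Topology ENNReal

/-- radial spectral density -/
noncomputable def Srad (d : ℕ) (α : ℝ) (a : ℝ → ℝ) (k : ES d) : ℝ :=
  a ‖k‖ * ‖k‖ ^ (-(2 * α + (d : ℝ) - 2))

/-- diagonal spectral density -/
noncomputable def rho (d : ℕ) (α : ℝ) (a : ℝ → ℝ) (i : Fin d) (k : ES d) : ℝ :=
  Srad d α a k * (1 - k i * k i / ‖k‖ ^ 2)

lemma Srad_integrable {d : ℕ} (hd : 2 ≤ d) {α : ℝ} (hα2 : α < 1) {K : ℝ} {a : ℝ → ℝ}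
    (hK : 0 < K)
    (ha_nonneg : ∀ r : ℝ, 0 ≤ r → 0 ≤ a r)
    (ha_bdd : ∃ M : ℝ, ∀ r : ℝ, 0 ≤ r → a r ≤ M)
    (ha_meas : Measurable a)
    (ha_supp : ∀ r : ℝ, K < r → a r = 0) : Integrable (Srad d α a) := by
  have : Nontrivial (ES d) := by
    have : Nonempty (Fin d) := ⟨⟨0, by omega⟩⟩
    infer_instance
  obtain ⟨M, hM⟩ := ha_bdd
  have key := integrable_fun_norm_addHaar (E := ES d) volume
    (f := fun r => a r * r ^ (-(2 * α + (d : ℝ) - 2)))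
  refine key.mpr ?_
  simp only [finrank_euclideanSpace, Fintype.card_fin, smul_eq_mul]
  have hg : IntegrableOn (fun y : ℝ => M * y ^ (1 - 2 * α)) (Ioc 0 K) := by
    have := (intervalIntegral.intervalIntegrable_rpow' (a := 0) (b := K) (r := 1 - 2 * α)
      (by linarith)).const_mul M
    rwa [intervalIntegrable_iff_integrableOn_Ioc_of_le hK.le] at this
  have hmeas : Measurable (fun y : ℝ => y ^ (d - 1) * (a y * y ^ (-(2 * α + (d : ℝ) - 2)))) := by
    fun_prop
  have h1 : IntegrableOn (fun y : ℝ => y ^ (d - 1) * (a y * y ^ (-(2 * α + (d : ℝ) - 2))))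
      (Ioc 0 K) := by
    refine Integrable.mono' hg hmeas.aestronglyMeasurable ?_
    refine (ae_restrict_iff' measurableSet_Ioc).mpr (ae_of_all _ fun y hy => ?_)
    have hy0 : 0 < y := hy.1
    have e : y ^ (d - 1) * (a y * y ^ (-(2 * α + (d : ℝ) - 2))) = a y * y ^ (1 - 2 * α) := by
      have : y ^ (1 - 2 * α) = y ^ (d - 1) * y ^ (-(2 * α + (d : ℝ) - 2)) := by
        rw [← Real.rpow_natCast, ← Real.rpow_add hy0]
        congr 1
        rw [Nat.cast_sub (by omega)]
        push_cast
        ring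
      rw [this]; ring
    rw [e, Real.norm_of_nonneg (mul_nonneg (ha_nonneg _ hy0.le) (by positivity))]
    have := hM y hy0.le
    gcongr
  have h2 : IntegrableOn (fun y : ℝ => y ^ (d - 1) * (a y * y ^ (-(2 * α + (d : ℝ) - 2))))
      (Ioi K) := by
    refine IntegrableOn.congr_fun (f := fun _ => (0:ℝ)) integrableOn_zero (fun y hy => ?_)
      measurableSet_Ioi
    simp [ha_supp y hy]
  have := h1.union h2
  rwa [Ioc_union_Ioi_eq_Ioi hK.le] at this

lemma Srad_nonneg {d : ℕ} {α : ℝ} {a : ℝ → ℝ}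
    (ha_nonneg : ∀ r : ℝ, 0 ≤ r → 0 ≤ a r) (k : ES d) : 0 ≤ Srad d α a k :=
  mul_nonneg (ha_nonneg _ (norm_nonneg _)) (by positivity)

lemma coord_sq_le {d : ℕ} (k : ES d) (i : Fin d) : k i * k i ≤ ‖k‖ ^ 2 := by
  rw [EuclideanSpace.real_norm_sq_eq, ← sq]
  exact Finset.single_le_sum (f := fun i => k i ^ 2) (fun _ _ => sq_nonneg _) (Finset.mem_univ i)

lemma ratio_bd {d : ℕ} (k : ES d) (i : Fin d) :
    0 ≤ k i * k i / ‖k‖ ^ 2 ∧ k i * k i / ‖k‖ ^ 2 ≤ 1 :=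
  ⟨div_nonneg (mul_self_nonneg _) (by positivity),
    div_le_one_of_le₀ (coord_sq_le k i) (by positivity)⟩

lemma rho_nonneg {d : ℕ} {α : ℝ} {a : ℝ → ℝ}
    (ha_nonneg : ∀ r : ℝ, 0 ≤ r → 0 ≤ a r) (i : Fin d) (k : ES d) : 0 ≤ rho d α a i k :=
  mul_nonneg (Srad_nonneg ha_nonneg k) (by linarith [(ratio_bd k i).2])

lemma rho_meas {d : ℕ} {α : ℝ} {a : ℝ → ℝ} (ha_meas : Measurable a) (i : Fin d) :
    Measurable (rho d α a i) := by
  unfold rho Srad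
  have h : Measurable (fun k : ES d => k i) := by fun_prop
  fun_prop

lemma rho_integrable {d : ℕ} {α : ℝ} {a : ℝ → ℝ} (hS : Integrable (Srad d α a))
    (ha_nonneg : ∀ r : ℝ, 0 ≤ r → 0 ≤ a r) (ha_meas : Measurable a) (i : Fin d) :
    Integrable (rho d α a i) := by
  refine hS.mono' (rho_meas ha_meas i).aestronglyMeasurable (ae_of_all _ fun k => ?_)
  rw [Real.norm_of_nonneg (rho_nonneg ha_nonneg i k), rho]
  have := ratio_bd k i
  exact mul_le_of_le_one_right (Srad_nonneg ha_nonneg k) (by linarith)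

/-- bounded measurable multipliers -/
lemma mul_rho_integrable {d : ℕ} {α : ℝ} {a : ℝ → ℝ} {i : Fin d} (hρ : Integrable (rho d α a i))
    {u : ES d → ℝ} (hu : Continuous u) {C : ℝ} (hC : ∀ k, |u k| ≤ C) :
    Integrable (fun k => u k * rho d α a i k) :=
  hρ.bdd_mul hu.aestronglyMeasurable (ae_of_all _ hC)

lemma covEntry_diag {d : ℕ} {α : ℝ} {a : ℝ → ℝ} (x : ES d) (i : Fin d) :
    covEntry d α a x i i = ∫ k : ES d, Real.cos ⟪k, x⟫ * rho d α a i k := by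
  simp [covEntry, rho, Srad]

lemma law_lin {d : ℕ} {α : ℝ} {a : ℝ → ℝ} {μ : Measure (Fld d)} (h : GaussLaw d α a μ)
    {i : Fin d} (hρ : Integrable (rho d α a i)) {M : ℕ} (w : Fin M → ℝ) (x : Fin M → ES d) :
    μ.map (fun f : Fld d => ∑ j, w j * f.1 (x j) i) =
      gaussianReal 0 (Real.toNNReal (∫ k : ES d, ((∑ j, w j * Real.cos ⟪k, x j⟫) ^ 2 +
        (∑ j, w j * Real.sin ⟪k, x j⟫) ^ 2) * rho d α a i k)) := by
  have h1 := h M x (fun j => w j • EuclideanSpace.single i 1)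
  have e1 : ∀ f : Fld d, ∑ j, ⟪w j • EuclideanSpace.single i (1:ℝ), f.1 (x j)⟫ =
      ∑ j, w j * f.1 (x j) i := by
    intro f
    simp [inner_smul_left, EuclideanSpace.inner_single_left]
  simp only [e1] at h1
  rw [h1]
  congr 2
  have e2 : ∀ j l : Fin M, ∑ i' : Fin d, ∑ i'' : Fin d,
      (w j • EuclideanSpace.single i (1:ℝ) : ES d) i' * covEntry d α a (x j - x l) i' i'' *
        (w l • EuclideanSpace.single i (1:ℝ) : ES d) i'' =
      ∫ k : ES d, w j * w l * (Real.cos ⟪k, x j - x l⟫ * rho d α a i k) := by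
    intro j l
    rw [Finset.sum_eq_single i, Finset.sum_eq_single i, integral_const_mul, ← covEntry_diag]
    · simp; ring
    · intro b _ hb; simp [hb]
    · simp
    · intro b _ hb; simp [hb]
    · simp
  simp_rw [e2]
  have hIntg : ∀ j l : Fin M, Integrable (fun k : ES d =>
      w j * w l * (Real.cos ⟪k, x j - x l⟫ * rho d α a i k)) := fun j l =>
    (mul_rho_integrable hρ (by fun_prop) (fun k => Real.abs_cos_le_one _)).const_mul _
  rw [← Finset.sum_congr rfl (fun j _ => integral_finsetSum _ (fun l _ => hIntg j l)),
    ← integral_finsetSum _ (fun j _ => integrable_finsetSum _ (fun l _ => hIntg j l))]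
  congr 1
  funext k
  rw [sq, sq, Finset.sum_mul_sum, Finset.sum_mul_sum, ← Finset.sum_add_distrib, Finset.sum_mul]
  refine Finset.sum_congr rfl fun j _ => ?_
  rw [← Finset.sum_add_distrib, Finset.sum_mul]
  refine Finset.sum_congr rfl fun l _ => ?_
  rw [inner_sub_right, Real.cos_sub]
  ring
end

section
open MeasureTheory ProbabilityTheory Filter Set
open scoped RealInnerProductSpace Topology ENNReal

/-- fourth moment of the standard Gaussian -/
noncomputable def C4 : ℝ := ∫ x, x ^ 4 ∂(gaussianReal 0 1)

lemma C4_nonneg : 0 ≤ C4 := integral_nonneg fun x => by positivity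

lemma gauss_sq (V : NNReal) : ∫ x, x ^ 2 ∂(gaussianReal 0 V) = V := by
  have h1 := variance_eq_integral (μ := gaussianReal 0 V) (X := fun x => x) measurable_id.aemeasurable
  rw [variance_fun_id_gaussianReal, integral_id_gaussianReal] at h1
  simpa using h1.symm

lemma gauss_int4 (V : NNReal) : Integrable (fun x => x ^ 4) (gaussianReal 0 V) := by
  have := (memLp_id_gaussianReal (μ := 0) (v := V) 4).integrable_norm_pow (by norm_num)
  refine this.congr (ae_of_all _ fun x => ?_)
  simp only [id, Real.norm_eq_abs]
  exact Even.pow_abs (by decide) x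

lemma gauss_four (V : NNReal) : ∫ x, x ^ 4 ∂(gaussianReal 0 V) = C4 * (V:ℝ) ^ 2 := by
  have h1 : gaussianReal 0 V = (gaussianReal 0 1).map (fun x => √(V:ℝ) * x) := by
    rw [gaussianReal_map_const_mul]
    congr 1
    · simp
    · ext
      simp
  rw [h1, integral_map (by fun_prop) (by fun_prop)]
  simp_rw [mul_pow]
  rw [integral_const_mul, C4]
  have : √(V:ℝ) ^ 4 = (V:ℝ) ^ 2 := by
    rw [show (4:ℕ) = 2 * 2 by norm_num, pow_mul, Real.sq_sqrt (by positivity)]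
  rw [this]; ring

/-- the variance of a linear functional -/
noncomputable def Vq {d : ℕ} (α : ℝ) (a : ℝ → ℝ) (i : Fin d) {M : ℕ} (w : Fin M → ℝ)
    (x : Fin M → ES d) : ℝ :=
  ∫ k : ES d, ((∑ j, w j * Real.cos ⟪k, x j⟫) ^ 2 +
        (∑ j, w j * Real.sin ⟪k, x j⟫) ^ 2) * rho d α a i k

section
variable {d : ℕ} {α : ℝ} {a : ℝ → ℝ} {μ : Measure (Fld d)} {i : Fin d} {M : ℕ}

lemma lin_measurable (i : Fin d) (w : Fin M → ℝ) (x : Fin M → ES d) :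
    Measurable (fun f : Fld d => ∑ j, w j * f.1 (x j) i) := by
  refine Finset.measurable_sum _ fun j _ => ?_
  have h : Measurable (fun z : ES d => z i) := by fun_prop
  exact (h.comp (Fld.measurable_apply (x j))).const_mul (w j)

lemma Vq_nonneg (ha_nonneg : ∀ r : ℝ, 0 ≤ r → 0 ≤ a r) (w : Fin M → ℝ) (x : Fin M → ES d) :
    0 ≤ Vq α a i w x :=
  integral_nonneg fun k => mul_nonneg (by positivity) (rho_nonneg ha_nonneg i k)

lemma lin_sq (h : GaussLaw d α a μ) (hρ : Integrable (rho d α a i))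
    (ha_nonneg : ∀ r : ℝ, 0 ≤ r → 0 ≤ a r) (w : Fin M → ℝ) (x : Fin M → ES d) :
    ∫ f : Fld d, (∑ j, w j * f.1 (x j) i) ^ 2 ∂μ = Vq α a i w x := by
  have h1 := law_lin h hρ w x
  have h2 := integral_map (μ := μ) (lin_measurable i w x).aemeasurable
    (f := fun y : ℝ => y ^ 2) (by fun_prop)
  rw [← h2, h1, gauss_sq, ← Vq, Real.coe_toNNReal _ (Vq_nonneg ha_nonneg w x)]

lemma lin_memLp (h : GaussLaw d α a μ) (hρ : Integrable (rho d α a i))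
    (w : Fin M → ℝ) (x : Fin M → ES d) :
    MemLp (fun f : Fld d => ∑ j, w j * f.1 (x j) i) 4 μ := by
  have h1 := law_lin h hρ w x
  have h2 := memLp_id_gaussianReal' (μ := 0) (v := Real.toNNReal (Vq α a i w x)) 4 (by norm_num)
  rw [Vq, ← h1, memLp_map_measure_iff (by fun_prop) (lin_measurable i w x).aemeasurable] at h2
  exact h2

lemma lin_int4 (h : GaussLaw d α a μ) (hρ : Integrable (rho d α a i))
    (w : Fin M → ℝ) (x : Fin M → ES d) :
    Integrable (fun f : Fld d => (∑ j, w j * f.1 (x j) i) ^ 4) μ := by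
  have := (lin_memLp h hρ w x).integrable_norm_pow (by norm_num)
  refine this.congr (ae_of_all _ fun f => ?_)
  simp only [Real.norm_eq_abs]
  exact Even.pow_abs (by decide) _

lemma lin_four (h : GaussLaw d α a μ) (hρ : Integrable (rho d α a i))
    (ha_nonneg : ∀ r : ℝ, 0 ≤ r → 0 ≤ a r) (w : Fin M → ℝ) (x : Fin M → ES d) :
    ∫ f : Fld d, (∑ j, w j * f.1 (x j) i) ^ 4 ∂μ = C4 * (Vq α a i w x) ^ 2 := by
  have h1 := law_lin h hρ w x
  have h2 := integral_map (μ := μ) (lin_measurable i w x).aemeasurable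
    (f := fun y : ℝ => y ^ 4) (by fun_prop)
  rw [← h2, h1, gauss_four, ← Vq, Real.coe_toNNReal _ (Vq_nonneg ha_nonneg w x)]

lemma lin_memLp2 [IsProbabilityMeasure μ] (h : GaussLaw d α a μ) (hρ : Integrable (rho d α a i))
    (w : Fin M → ℝ) (x : Fin M → ES d) :
    MemLp (fun f : Fld d => ∑ j, w j * f.1 (x j) i) 2 μ :=
  (lin_memLp h hρ w x).mono_exponent (by norm_num)

lemma eval_memLp2 [IsProbabilityMeasure μ] (h : GaussLaw d α a μ) (hρ : Integrable (rho d α a i))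
    (x : ES d) : MemLp (fun f : Fld d => f.1 x i) 2 μ := by
  have := lin_memLp2 h hρ (fun _ : Fin 1 => 1) (fun _ => x)
  simpa using this

lemma cov_eval [IsProbabilityMeasure μ] (h : GaussLaw d α a μ) (hρ : Integrable (rho d α a i))
    (ha_nonneg : ∀ r : ℝ, 0 ≤ r → 0 ≤ a r) (x y : ES d) :
    ∫ f : Fld d, f.1 x i * f.1 y i ∂μ = ∫ k : ES d, Real.cos ⟪k, x - y⟫ * rho d α a i k := by
  have h1 := lin_sq h hρ ha_nonneg ![1, 1] ![x, y]
  have h2 := lin_sq h hρ ha_nonneg ![1, -1] ![x, y]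
  have i1 := (lin_memLp2 h hρ ![1, 1] ![x, y]).integrable_sq
  have i2 := (lin_memLp2 h hρ ![1, -1] ![x, y]).integrable_sq
  have e : ∀ f : Fld d, f.1 x i * f.1 y i = (1/4) *
    ((∑ j, ![(1:ℝ), 1] j * f.1 (![x, y] j) i) ^ 2 - (∑ j, ![(1:ℝ), -1] j * f.1 (![x, y] j) i) ^ 2) := by
    intro f
    simp only [Fin.sum_univ_two, Matrix.cons_val_zero, Matrix.cons_val_one]
    ring
  simp_rw [e]
  rw [integral_const_mul, integral_sub i1 i2, h1, h2, Vq, Vq, ← integral_sub, ← integral_const_mul]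
  · congr 1
    funext k
    simp only [Fin.sum_univ_two, Matrix.cons_val_zero, Matrix.cons_val_one, inner_sub_right,
      Real.cos_sub]
    ring
  · refine mul_rho_integrable hρ (C := 8) ?_ ?_
    · simp only [Fin.sum_univ_two, Matrix.cons_val_zero, Matrix.cons_val_one]
      fun_prop
    · intro k
      simp only [Fin.sum_univ_two, Matrix.cons_val_zero, Matrix.cons_val_one]
      rw [abs_of_nonneg (by positivity)]
      nlinarith [Real.sin_sq_add_cos_sq ⟪k, x⟫, Real.sin_sq_add_cos_sq ⟪k, y⟫,
        sq_nonneg (Real.cos ⟪k, x⟫ - Real.cos ⟪k, y⟫), sq_nonneg (Real.sin ⟪k, x⟫ - Real.sin ⟪k, y⟫)]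
  · refine mul_rho_integrable hρ (C := 8) ?_ ?_
    · simp only [Fin.sum_univ_two, Matrix.cons_val_zero, Matrix.cons_val_one]
      fun_prop
    · intro k
      simp only [Fin.sum_univ_two, Matrix.cons_val_zero, Matrix.cons_val_one]
      rw [abs_of_nonneg (by positivity)]
      nlinarith [Real.sin_sq_add_cos_sq ⟪k, x⟫, Real.sin_sq_add_cos_sq ⟪k, y⟫,
        sq_nonneg (Real.cos ⟪k, x⟫ + Real.cos ⟪k, y⟫), sq_nonneg (Real.sin ⟪k, x⟫ + Real.sin ⟪k, y⟫)]

end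
end

section
open MeasureTheory ProbabilityTheory Filter Set
open scoped RealInnerProductSpace Topology ENNReal

/-- Dirichlet type sum -/
noncomputable def Dk (N : ℕ) (θ : ℝ) : ℂ := ∑ j : Fin N, Complex.exp ((((j:ℕ):ℝ) * θ : ℝ) * Complex.I)

lemma Dk_le (N : ℕ) (θ : ℝ) : ‖Dk N θ‖ ≤ N := by
  refine (norm_sum_le _ _).trans ?_
  simp only [Complex.norm_exp_ofReal_mul_I]
  simp

lemma Dk_geom (N : ℕ) (θ : ℝ) (hθ : |θ| ≤ 1 / 2) : |θ| * ‖Dk N θ‖ ≤ 4 := by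
  have h1 : Dk N θ * (Complex.exp (θ * Complex.I) - 1) =
      Complex.exp (((N:ℝ) * θ : ℝ) * Complex.I) - 1 := by
    have : Dk N θ = ∑ j ∈ Finset.range N, Complex.exp (θ * Complex.I) ^ j := by
      rw [Dk, Finset.sum_range]
      refine Finset.sum_congr rfl fun j _ => ?_
      rw [← Complex.exp_nat_mul]
      push_cast
      ring_nf
    rw [this, geom_sum_mul, ← Complex.exp_nat_mul]
    push_cast
    ring_nf
  have h2 : ‖Complex.exp (((N:ℝ) * θ : ℝ) * Complex.I) - 1‖ ≤ 2 := by
    refine (norm_sub_le _ _).trans ?_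
    rw [Complex.norm_exp_ofReal_mul_I]
    norm_num
  have hn : ‖(θ:ℂ) * Complex.I‖ = |θ| := by simp
  have h3 : |θ| / 2 ≤ ‖Complex.exp (θ * Complex.I) - 1‖ := by
    have h4 := Complex.norm_exp_sub_one_sub_id_le (x := θ * Complex.I) (by rw [hn]; linarith)
    rw [hn] at h4
    have h5 : ‖(θ:ℂ) * Complex.I‖ ≤ ‖Complex.exp (θ * Complex.I) - 1‖ +
        ‖Complex.exp (θ * Complex.I) - 1 - θ * Complex.I‖ := by
      have := norm_sub_le (Complex.exp (θ * Complex.I) - 1)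
        (Complex.exp (θ * Complex.I) - 1 - θ * Complex.I)
      simpa using this
    rw [hn] at h5
    nlinarith [abs_nonneg θ]
  have h6 : ‖Dk N θ‖ * ‖Complex.exp (θ * Complex.I) - 1‖ ≤ 2 := by
    rw [← norm_mul, h1]; exact h2
  nlinarith [norm_nonneg (Dk N θ)]

lemma Dk_ge (N : ℕ) (θ : ℝ) (hθ : |θ| * N ≤ 1) : (N:ℝ) / 2 ≤ ‖Dk N θ‖ := by
  refine le_trans ?_ (Complex.re_le_norm _)
  rw [Dk, Complex.re_sum]
  simp only [Complex.exp_ofReal_mul_I_re]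
  have : ∀ j : Fin N, (1:ℝ)/2 ≤ Real.cos (((j:ℕ):ℝ) * θ) := by
    intro j
    have h1 := Real.one_sub_sq_div_two_le_cos (x := ((j:ℕ):ℝ) * θ)
    have h2 : |((j:ℕ):ℝ) * θ| ≤ 1 := by
      rw [abs_mul, Nat.abs_cast]
      have : ((j:ℕ):ℝ) ≤ N := by exact_mod_cast j.2.le
      nlinarith [abs_nonneg θ]
    have h3 : (((j:ℕ):ℝ) * θ) ^ 2 ≤ 1 := by
      rw [← sq_abs]; exact pow_le_one₀ (abs_nonneg _) h2
    linarith
  calc (N:ℝ) / 2 = ∑ j : Fin N, (1:ℝ)/2 := by simp; ring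
    _ ≤ _ := Finset.sum_le_sum fun j _ => this j

/-- lattice point -/
noncomputable def lat {d N : ℕ} (h : ℝ) (p : Fin d → Fin N) : ES d :=
  WithLp.toLp 2 (fun i => h * ((p i : ℕ) : ℝ))

lemma prod_Dk {d N : ℕ} (h : ℝ) (k : ES d) :
    ∏ i, Dk N (h * k i) = ∑ p : Fin d → Fin N, Complex.exp ((⟪k, lat h p⟫ : ℝ) * Complex.I) := by
  unfold Dk
  rw [Finset.prod_univ_sum, Fintype.piFinset_univ]
  refine Finset.sum_congr rfl fun p _ => ?_
  rw [← Complex.exp_sum, ← Finset.sum_mul]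
  congr 2
  rw [PiLp.inner_apply]
  push_cast
  refine Finset.sum_congr rfl fun i _ => ?_
  simp [lat]
  ring

lemma normSq_sum {ι : Type*} [Fintype ι] (u : ι → ℝ) :
    ‖∑ p, Complex.exp ((u p : ℝ) * Complex.I)‖ ^ 2 = ∑ q : ι × ι, Real.cos (u q.1 - u q.2) := by
  rw [← Complex.normSq_eq_norm_sq, Complex.normSq_apply, Complex.re_sum, Complex.im_sum,
    Fintype.sum_prod_type]
  simp only [Complex.exp_ofReal_mul_I_re, Complex.exp_ofReal_mul_I_im]
  rw [Finset.sum_mul_sum, Finset.sum_mul_sum, ← Finset.sum_add_distrib]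
  refine Finset.sum_congr rfl fun j _ => ?_
  rw [← Finset.sum_add_distrib]
  refine Finset.sum_congr rfl fun l _ => ?_
  rw [Real.cos_sub]

lemma sin_sum_zero {ι : Type*} [Fintype ι] (u : ι → ℝ) :
    ∑ q : ι × ι, Real.sin (u q.1 - u q.2) = 0 := by
  have h : ∑ q : ι × ι, Real.sin (u q.1 - u q.2) = ∑ q : ι × ι, Real.sin (u q.2 - u q.1) :=
    Fintype.sum_equiv (Equiv.prodComm ι ι) _ _ (fun q => rfl)
  have h2 : ∑ q : ι × ι, Real.sin (u q.2 - u q.1) = - ∑ q : ι × ι, Real.sin (u q.1 - u q.2) := by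
    rw [← Finset.sum_neg_distrib]
    refine Finset.sum_congr rfl fun q _ => ?_
    rw [← Real.sin_neg]; ring_nf
  linarith

/-- The Fejer weights. -/
lemma fejer (d : ℕ) {K : ℝ} (hK : 0 < K) (N : ℕ) (hN : 1 ≤ N) :
    ∃ (M : ℕ) (w : Fin M → ℝ) (z : Fin M → ES d) (m : ES d → ℝ),
      (∀ k, ∑ j, w j * Real.cos ⟪k, z j⟫ = m k) ∧
      (∀ k, ∑ j, w j * Real.sin ⟪k, z j⟫ = 0) ∧
      (∀ k, 0 ≤ m k) ∧ (∀ k, m k ≤ 1) ∧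
      (∀ k l, ‖k‖ ≤ K → k l ^ 2 * m k ≤ 64 * K ^ 2 / N ^ 2) ∧
      (∀ k, ‖k‖ ≤ K / N → (1/4 : ℝ) ^ d ≤ m k) := by
  have hN0 : (0:ℝ) < N := by exact_mod_cast hN
  set h : ℝ := 1 / (2 * K) with hh
  have hh0 : 0 < h := by positivity
  let ι := (Fin d → Fin N) × (Fin d → Fin N)
  let e : Fin (Fintype.card ι) ≃ ι := (Fintype.equivFin ι).symm
  set W : ℝ := ((N:ℝ) ^ d)⁻¹ ^ 2 with hW
  set m : ES d → ℝ := fun k => ∏ i, (‖Dk N (h * k i)‖ / N) ^ 2 with hm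
  have hm' : ∀ k, m k = W * ‖∏ i, Dk N (h * k i)‖ ^ 2 := by
    intro k
    simp only [hm, hW]
    rw [norm_prod, Finset.prod_pow, Finset.prod_div_distrib]
    simp only [Finset.prod_const, Finset.card_univ, Fintype.card_fin]
    rw [div_eq_mul_inv, mul_pow]; ring
  have hcoord : ∀ (k : ES d) i, |k i| ≤ ‖k‖ := fun k i => by
    have := PiLp.norm_apply_le k i
    simpa using this
  have hfac0 : ∀ (k : ES d) i, 0 ≤ (‖Dk N (h * k i)‖ / N) ^ 2 := fun k i => by positivity
  have hfac1 : ∀ (k : ES d) i, (‖Dk N (h * k i)‖ / N) ^ 2 ≤ 1 := fun k i =>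
    pow_le_one₀ (by positivity) (div_le_one_of_le₀ (Dk_le _ _) hN0.le)
  refine ⟨Fintype.card ι, fun _ => W, fun j => lat h (e j).1 - lat h (e j).2, m, ?_, ?_, ?_, ?_, ?_, ?_⟩
  · intro k
    rw [hm', prod_Dk, normSq_sum, ← Finset.mul_sum]
    congr 1
    refine Fintype.sum_equiv e _ _ fun j => ?_
    rw [inner_sub_right]
  · intro k
    rw [← Finset.mul_sum]
    have := sin_sum_zero (fun p : Fin d → Fin N => ⟪k, lat h p⟫)
    rw [← Equiv.sum_comp e] at this
    simp only [inner_sub_right]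
    rw [this, mul_zero]
  · intro k
    exact Finset.prod_nonneg fun i _ => hfac0 k i
  · intro k
    exact Finset.prod_le_one (fun i _ => hfac0 k i) (fun i _ => hfac1 k i)
  · intro k l hk
    have h1 : m k ≤ (‖Dk N (h * k l)‖ / N) ^ 2 := by
      simp only [hm]
      rw [← Finset.mul_prod_erase _ _ (Finset.mem_univ l)]
      exact mul_le_of_le_one_right (hfac0 k l)
        (Finset.prod_le_one (fun i _ => hfac0 k i) (fun i _ => hfac1 k i))
    have h2 := Dk_geom N (h * k l) (by
      rw [abs_mul, abs_of_pos hh0, hh]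
      have := (hcoord k l).trans hk
      rw [div_mul_eq_mul_div, div_le_div_iff₀ (by positivity) (by norm_num)]
      linarith)
    have h3 : (|h * k l| * ‖Dk N (h * k l)‖) ^ 2 ≤ 4 ^ 2 := by gcongr
    rw [mul_pow, sq_abs, mul_pow] at h3
    have h4 : k l ^ 2 * ‖Dk N (h * k l)‖ ^ 2 ≤ 64 * K ^ 2 := by
      have : h ^ 2 = 1 / (4 * K ^ 2) := by rw [hh]; field_simp; norm_num
      rw [this, mul_assoc, div_mul_eq_mul_div, div_le_iff₀ (by positivity)] at h3
      linarith
    calc k l ^ 2 * m k ≤ k l ^ 2 * (‖Dk N (h * k l)‖ / N) ^ 2 := by gcongr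
      _ = (k l ^ 2 * ‖Dk N (h * k l)‖ ^ 2) / N ^ 2 := by rw [div_pow]; ring
      _ ≤ _ := by gcongr
  · intro k hk
    have h1 : ∀ i, (1/4 : ℝ) ≤ (‖Dk N (h * k i)‖ / N) ^ 2 := by
      intro i
      have h2 := Dk_ge N (h * k i) (by
        rw [abs_mul, abs_of_pos hh0, hh]
        have h3 := (hcoord k i).trans hk
        rw [le_div_iff₀ hN0] at h3
        rw [div_mul_eq_mul_div, div_mul_eq_mul_div, div_le_one (by positivity)]
        linarith)
      have h3 : (1/2 : ℝ) ≤ ‖Dk N (h * k i)‖ / N := by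
        rw [le_div_iff₀ hN0]; linarith
      nlinarith
    calc (1/4 : ℝ) ^ d = ∏ i : Fin d, (1/4 : ℝ) := by simp
      _ ≤ _ := Finset.prod_le_prod (fun i _ => by norm_num) (fun i _ => h1 i)
end

section
open MeasureTheory ProbabilityTheory Filter Set
open scoped RealInnerProductSpace Topology ENNReal

/-- Properties of the Fejer weights. -/
structure Fej (d : ℕ) (K : ℝ) (N : ℕ) {M : ℕ} (w : Fin M → ℝ) (z : Fin M → ES d)
    (m : ES d → ℝ) : Prop where
  cs : ∀ k, ∑ j, w j * Real.cos ⟪k, z j⟫ = m k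
  sn : ∀ k, ∑ j, w j * Real.sin ⟪k, z j⟫ = 0
  nonneg : ∀ k, 0 ≤ m k
  le_one : ∀ k, m k ≤ 1
  up : ∀ k l, ‖k‖ ≤ K → k l ^ 2 * m k ≤ 64 * K ^ 2 / N ^ 2
  low : ∀ k, ‖k‖ ≤ K / N → (1/4 : ℝ) ^ d ≤ m k

/-- Spectral assumptions. -/
structure Spec (d : ℕ) (α K : ℝ) (a : ℝ → ℝ) : Prop where
  int : ∀ i, Integrable (rho d α a i)
  nonneg : ∀ r : ℝ, 0 ≤ r → 0 ≤ a r
  supp : ∀ r : ℝ, K < r → a r = 0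

/-- averaged field -/
noncomputable def Gop {d M : ℕ} (w : Fin M → ℝ) (z : Fin M → ES d) (f : Fld d) (x : ES d) : ES d :=
  ∑ j, w j • f.1 (x + z j)

section
variable {d M N : ℕ} {α K : ℝ} {a : ℝ → ℝ} {μ : Measure (Fld d)} {w : Fin M → ℝ}
  {z : Fin M → ES d} {m : ES d → ℝ}

lemma Gop_apply (w : Fin M → ℝ) (z : Fin M → ES d) (f : Fld d) (x : ES d) (i : Fin d) :
    Gop w z f x i = ∑ j, w j * f.1 (x + z j) i := by
  simp [Gop]

lemma Gop_contDiff (w : Fin M → ℝ) (z : Fin M → ES d) (f : Fld d) : ContDiff ℝ 1 (Gop w z f) := by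
  unfold Gop
  refine ContDiff.sum fun j _ => ?_
  have h1 : ContDiff ℝ 1 (fun y : ES d => y + z j) := by fun_prop
  exact (f.2.1.comp h1).const_smul (w j)

lemma Gop_shift (w : Fin M → ℝ) (z : Fin M → ES d) (f : Fld d) (x y : ES d) :
    Gop w z (f.shift x) y = Gop w z f (x + y) := by
  simp [Gop, add_assoc]

lemma Gop_measurable (w : Fin M → ℝ) (z : Fin M → ES d) (x : ES d) :
    Measurable (fun f : Fld d => Gop w z f x) :=
  Finset.measurable_sum _ fun j _ => (Fld.measurable_apply _).const_smul (w j)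

lemma Fej.cont (hf : Fej d K N w z m) : Continuous m := by
  have : m = fun k => ∑ j, w j * Real.cos ⟪k, z j⟫ := by
    funext k; exact (hf.cs k).symm
  rw [this]
  fun_prop

lemma Fej.abs_le (hf : Fej d K N w z m) (k : ES d) : |m k| ≤ 1 := by
  rw [abs_of_nonneg (hf.nonneg k)]; exact hf.le_one k

/-- component variance -/
noncomputable def sg (α : ℝ) (a : ℝ → ℝ) (m : ES d → ℝ) (i : Fin d) : ℝ :=
  ∫ k : ES d, m k * rho d α a i k

lemma sg_nonneg (hf : Fej d K N w z m) (hs : Spec d α K a) (i : Fin d) : 0 ≤ sg α a m i :=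
  integral_nonneg fun k => mul_nonneg (hf.nonneg k) (rho_nonneg hs.nonneg i k)

lemma sg_int (hf : Fej d K N w z m) (hs : Spec d α K a) (i : Fin d) :
    Integrable (fun k => m k * rho d α a i k) :=
  mul_rho_integrable (hs.int i) hf.cont hf.abs_le

lemma cross_comp [IsProbabilityMeasure μ] (h : GaussLaw d α a μ) (hf : Fej d K N w z m)
    (hs : Spec d α K a) (i : Fin d) :
    Integrable (fun f : Fld d => f.1 0 i * Gop w z f 0 i) μ ∧
    ∫ f : Fld d, f.1 0 i * Gop w z f 0 i ∂μ = sg α a m i := by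
  have e : ∀ f : Fld d, f.1 0 i * Gop w z f 0 i = ∑ j, w j * (f.1 0 i * f.1 (z j) i) := by
    intro f
    rw [Gop_apply, Finset.mul_sum]
    refine Finset.sum_congr rfl fun j _ => ?_
    rw [zero_add]; ring
  simp_rw [e]
  have hi : ∀ j, Integrable (fun f : Fld d => w j * (f.1 0 i * f.1 (z j) i)) μ := fun j =>
    ((eval_memLp2 h (hs.int i) 0).integrable_mul (eval_memLp2 h (hs.int i) (z j))).const_mul _
  refine ⟨integrable_finsetSum _ fun j _ => hi j, ?_⟩
  rw [integral_finsetSum _ fun j _ => hi j]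
  simp_rw [integral_const_mul, cov_eval h (hs.int i) hs.nonneg]
  simp_rw [← integral_const_mul]
  rw [← integral_finsetSum, sg]
  · congr 1
    funext k
    rw [← hf.cs, Finset.sum_mul]
    refine Finset.sum_congr rfl fun j _ => ?_
    rw [zero_sub, inner_neg_right, Real.cos_neg]; ring
  · intro j _
    exact (mul_rho_integrable (hs.int i) (by fun_prop) (fun k => Real.abs_cos_le_one _)).const_mul _

lemma cross [IsProbabilityMeasure μ] (h : GaussLaw d α a μ) (hf : Fej d K N w z m)
    (hs : Spec d α K a) :
    Integrable (fun f : Fld d => ⟪f.1 0, Gop w z f 0⟫) μ ∧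
    ∫ f : Fld d, ⟪f.1 0, Gop w z f 0⟫ ∂μ = ∑ i, sg α a m i := by
  have e : ∀ f : Fld d, ⟪f.1 0, Gop w z f 0⟫ = ∑ i, f.1 0 i * Gop w z f 0 i := by
    intro f
    rw [PiLp.inner_apply]
    refine Finset.sum_congr rfl fun j _ => ?_
    simp [mul_comm]
  simp_rw [e]
  refine ⟨integrable_finsetSum _ fun i _ => (cross_comp h hf hs i).1, ?_⟩
  rw [integral_finsetSum _ fun i _ => (cross_comp h hf hs i).1]
  exact Finset.sum_congr rfl fun i _ => (cross_comp h hf hs i).2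

lemma Gsq [IsProbabilityMeasure μ] (h : GaussLaw d α a μ) (hf : Fej d K N w z m)
    (hs : Spec d α K a) :
    Integrable (fun f : Fld d => ‖Gop w z f 0‖ ^ 2) μ ∧
    ∫ f : Fld d, ‖Gop w z f 0‖ ^ 2 ∂μ ≤ ∑ i, sg α a m i := by
  have e : ∀ f : Fld d, ‖Gop w z f 0‖ ^ 2 = ∑ i, (∑ j, w j * f.1 (z j) i) ^ 2 := by
    intro f
    rw [EuclideanSpace.real_norm_sq_eq]
    simp [Gop_apply]
  simp_rw [e]
  have hi : ∀ i, Integrable (fun f : Fld d => (∑ j, w j * f.1 (z j) i) ^ 2) μ := fun i =>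
    (lin_memLp2 h (hs.int i) w z).integrable_sq
  refine ⟨integrable_finsetSum _ fun i _ => hi i, ?_⟩
  rw [integral_finsetSum _ fun i _ => hi i]
  refine Finset.sum_le_sum fun i _ => ?_
  rw [lin_sq h (hs.int i) hs.nonneg, Vq, sg]
  simp only [hf.cs, hf.sn]
  refine integral_mono_of_nonneg (ae_of_all _ fun k => ?_) (sg_int hf hs i) (ae_of_all _ fun k => ?_)
  · exact mul_nonneg (by positivity) (rho_nonneg hs.nonneg i k)
  · have h1 := hf.nonneg k
    have h2 := hf.le_one k
    have h3 := rho_nonneg (α := α) hs.nonneg i k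
    simp only
    gcongr
    nlinarith

/-- derivative of the averaged field -/
noncomputable def dG (w : Fin M → ℝ) (z : Fin M → ES d) (l i : Fin d) (f : Fld d) : ℝ :=
  (fderiv ℝ (Gop w z f) 0 (EuclideanSpace.single l 1)) i

/-- difference quotient -/
noncomputable def dQ (w : Fin M → ℝ) (z : Fin M → ES d) (l i : Fin d) (n : ℕ) (f : Fld d) : ℝ :=
  ((n:ℝ) + 1) * (Gop w z f (((n:ℝ) + 1)⁻¹ • EuclideanSpace.single l 1) i - Gop w z f 0 i)

lemma dQ_tendsto (w : Fin M → ℝ) (z : Fin M → ES d) (l i : Fin d) (f : Fld d) :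
    Tendsto (fun n => dQ w z l i n f) atTop (𝓝 (dG w z l i f)) := by
  have h1 : HasFDerivAt (Gop w z f) (fderiv ℝ (Gop w z f) 0) 0 :=
    ((Gop_contDiff w z f).differentiable (by norm_num) 0).hasFDerivAt
  have h2 := h1.lim_real (EuclideanSpace.single l 1)
  have h3 : Tendsto (fun n : ℕ => (n:ℝ) + 1) atTop atTop :=
    tendsto_atTop_add_const_right _ _ tendsto_natCast_atTop_atTop
  have h4 := h2.comp h3
  have hc : Continuous (fun y : ES d => y i) := by fun_prop
  have h5 := (hc.tendsto _).comp h4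
  refine h5.congr fun n => ?_
  simp [dQ]

lemma dQ_eq (w : Fin M → ℝ) (z : Fin M → ES d) (l i : Fin d) (n : ℕ) (f : Fld d) :
    dQ w z l i n f = ∑ j, (Fin.append (fun j => ((n:ℝ)+1) * w j) (fun j => -(((n:ℝ)+1) * w j))) j *
      f.1 ((Fin.append (fun j => ((n:ℝ) + 1)⁻¹ • EuclideanSpace.single l 1 + z j) z) j) i := by
  rw [Fin.sum_univ_add]
  simp only [Fin.append_left, Fin.append_right, dQ, Gop_apply, zero_add]
  rw [mul_sub, Finset.mul_sum, Finset.mul_sum, sub_eq_add_neg, ← Finset.sum_neg_distrib]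
  congr 1
  · exact Finset.sum_congr rfl fun j _ => by ring
  · exact Finset.sum_congr rfl fun j _ => by ring

lemma dQ_var (hf : Fej d K N w z m) (hs : Spec d α K a) (l i : Fin d) (n : ℕ) :
    Vq α a i (Fin.append (fun j => ((n:ℝ)+1) * w j) (fun j => -(((n:ℝ)+1) * w j)))
      (Fin.append (fun j => ((n:ℝ) + 1)⁻¹ • EuclideanSpace.single l 1 + z j) z) ≤
      64 * K ^ 2 / N ^ 2 * sg α a m i := by
  rw [Vq, sg, ← integral_const_mul]
  refine integral_mono_of_nonneg (ae_of_all _ fun k => ?_) ((sg_int hf hs i).const_mul _)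
    (ae_of_all _ fun k => ?_)
  · exact mul_nonneg (by positivity) (rho_nonneg hs.nonneg i k)
  · simp only
    rcases lt_or_ge K ‖k‖ with hk | hk
    · have : rho d α a i k = 0 := by simp [rho, Srad, hs.supp _ hk]
      rw [this]; simp
    rw [← mul_assoc]
    refine mul_le_mul_of_nonneg_right ?_ (rho_nonneg hs.nonneg i k)
    rw [Fin.sum_univ_add, Fin.sum_univ_add]
    simp only [Fin.append_left, Fin.append_right]
    set p : ℝ := (n:ℝ) + 1 with hp
    have hp0 : 0 < p := by positivity
    set θ : ℝ := p⁻¹ * k l with hθ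
    have hin : ∀ j, ⟪k, p⁻¹ • EuclideanSpace.single l 1 + z j⟫ = θ + ⟪k, z j⟫ := by
      intro j
      rw [inner_add_right, inner_smul_right, EuclideanSpace.inner_single_right]
      simp [hθ]
    have e1 : ∑ j, p * w j * Real.cos ⟪k, p⁻¹ • EuclideanSpace.single l 1 + z j⟫ +
        ∑ j, -(p * w j) * Real.cos ⟪k, z j⟫ = p * (Real.cos θ - 1) * m k := by
      have : p * (Real.cos θ - 1) * m k = p * (Real.cos θ - 1) * (∑ j, w j * Real.cos ⟪k, z j⟫)
          - p * Real.sin θ * (∑ j, w j * Real.sin ⟪k, z j⟫) := by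
        rw [hf.cs, hf.sn]; ring
      rw [this, Finset.mul_sum, Finset.mul_sum, ← Finset.sum_add_distrib, ← Finset.sum_sub_distrib]
      refine Finset.sum_congr rfl fun j _ => ?_
      rw [hin, Real.cos_add]; ring
    have e2 : ∑ j, p * w j * Real.sin ⟪k, p⁻¹ • EuclideanSpace.single l 1 + z j⟫ +
        ∑ j, -(p * w j) * Real.sin ⟪k, z j⟫ = p * Real.sin θ * m k := by
      have : p * Real.sin θ * m k = p * Real.sin θ * (∑ j, w j * Real.cos ⟪k, z j⟫)
          + p * (Real.cos θ - 1) * (∑ j, w j * Real.sin ⟪k, z j⟫) := by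
        rw [hf.cs, hf.sn]; ring
      rw [this, Finset.mul_sum, Finset.mul_sum, ← Finset.sum_add_distrib, ← Finset.sum_add_distrib]
      refine Finset.sum_congr rfl fun j _ => ?_
      rw [hin, Real.sin_add]; ring
    rw [e1, e2]
    have e3 : (p * (Real.cos θ - 1) * m k) ^ 2 + (p * Real.sin θ * m k) ^ 2 =
        p ^ 2 * (2 - 2 * Real.cos θ) * m k ^ 2 := by
      have := Real.sin_sq_add_cos_sq θ
      have hsin : Real.sin θ ^ 2 = 1 - Real.cos θ ^ 2 := by linarith
      rw [mul_pow, mul_pow, mul_pow, mul_pow, hsin]; ring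
    rw [e3]
    have e4 : 2 - 2 * Real.cos θ ≤ θ ^ 2 := by
      linarith [Real.one_sub_sq_div_two_le_cos (x := θ)]
    have e5 : p ^ 2 * θ ^ 2 = k l ^ 2 := by
      rw [hθ, mul_pow, ← mul_assoc, ← mul_pow, mul_inv_cancel₀ hp0.ne']; ring
    calc p ^ 2 * (2 - 2 * Real.cos θ) * m k ^ 2 ≤ p ^ 2 * θ ^ 2 * m k ^ 2 := by gcongr
      _ = (k l ^ 2 * m k) * m k := by rw [e5]; ring
      _ ≤ _ := mul_le_mul_of_nonneg_right (hf.up k l hk) (hf.nonneg k)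

lemma dG_measurable (w : Fin M → ℝ) (z : Fin M → ES d) (l i : Fin d) :
    Measurable (dG w z l i) := by
  refine measurable_of_tendsto_metrizable (f := fun n => dQ w z l i n) ?_ ?_
  · intro n
    have h : Measurable (fun y : ES d => y i) := by fun_prop
    exact ((h.comp (Gop_measurable w z _)).sub (h.comp (Gop_measurable w z _))).const_mul _
  · rw [tendsto_pi_nhds]
    exact fun f => dQ_tendsto w z l i f

lemma dG_four [IsProbabilityMeasure μ] (h : GaussLaw d α a μ) (hf : Fej d K N w z m)
    (hs : Spec d α K a) (l i : Fin d) :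
    Integrable (fun f => dG w z l i f ^ 4) μ ∧
    ∫ f, dG w z l i f ^ 4 ∂μ ≤ C4 * (64 * K ^ 2 / N ^ 2 * sg α a m i) ^ 2 := by
  set B : ℝ := C4 * (64 * K ^ 2 / N ^ 2 * sg α a m i) ^ 2 with hB
  have hB0 : 0 ≤ B := mul_nonneg C4_nonneg (by positivity)
  have hmeas : Measurable (fun f => dG w z l i f ^ 4) := (dG_measurable w z l i).pow_const 4
  have hdm : ∀ n, Measurable (dQ w z l i n) := by
    intro n
    have h : Measurable (fun y : ES d => y i) := by fun_prop
    exact ((h.comp (Gop_measurable w z _)).sub (h.comp (Gop_measurable w z _))).const_mul _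
  have hn : ∀ n, ∫⁻ f, ENNReal.ofReal (dQ w z l i n f ^ 4) ∂μ ≤ ENNReal.ofReal B := by
    intro n
    have h1 := lin_int4 h (hs.int i) (Fin.append (fun j => ((n:ℝ)+1) * w j)
      (fun j => -(((n:ℝ)+1) * w j)))
      (Fin.append (fun j => ((n:ℝ) + 1)⁻¹ • EuclideanSpace.single l 1 + z j) z)
    have h2 := lin_four h (hs.int i) hs.nonneg (Fin.append (fun j => ((n:ℝ)+1) * w j)
      (fun j => -(((n:ℝ)+1) * w j)))
      (Fin.append (fun j => ((n:ℝ) + 1)⁻¹ • EuclideanSpace.single l 1 + z j) z)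
    simp only [← dQ_eq] at h1 h2
    rw [← ofReal_integral_eq_lintegral_ofReal h1 (ae_of_all _ fun f => by positivity), h2]
    refine ENNReal.ofReal_le_ofReal ?_
    have h3 := dQ_var hf hs l i n
    have h4 := Vq_nonneg (α := α) (i := i) hs.nonneg (Fin.append (fun j => ((n:ℝ)+1) * w j)
      (fun j => -(((n:ℝ)+1) * w j)))
      (Fin.append (fun j => ((n:ℝ) + 1)⁻¹ • EuclideanSpace.single l 1 + z j) z)
    have := C4_nonneg
    rw [hB]
    gcongr
  have hl : ∫⁻ f, ENNReal.ofReal (dG w z l i f ^ 4) ∂μ ≤ ENNReal.ofReal B := by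
    have hlim : ∀ f, ENNReal.ofReal (dG w z l i f ^ 4) =
        liminf (fun n => ENNReal.ofReal (dQ w z l i n f ^ 4)) atTop := by
      intro f
      exact (Tendsto.liminf_eq (ENNReal.tendsto_ofReal ((dQ_tendsto w z l i f).pow 4))).symm
    calc ∫⁻ f, ENNReal.ofReal (dG w z l i f ^ 4) ∂μ
        = ∫⁻ f, liminf (fun n => ENNReal.ofReal (dQ w z l i n f ^ 4)) atTop ∂μ := by
          simp_rw [hlim]
      _ ≤ liminf (fun n => ∫⁻ f, ENNReal.ofReal (dQ w z l i n f ^ 4) ∂μ) atTop :=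
          lintegral_liminf_le fun n => ((hdm n).pow_const 4).ennreal_ofReal
      _ ≤ liminf (fun _ : ℕ => ENNReal.ofReal B) atTop :=
          liminf_le_liminf (Eventually.of_forall hn)
      _ = _ := by simp
  have hIntg : Integrable (fun f => dG w z l i f ^ 4) μ := by
    refine (lintegral_ofReal_ne_top_iff_integrable hmeas.aestronglyMeasurable
      (ae_of_all _ fun f => by positivity)).mp ?_
    exact ne_top_of_le_ne_top ENNReal.ofReal_ne_top hl
  refine ⟨hIntg, ?_⟩
  rw [← ofReal_integral_eq_lintegral_ofReal hIntg (ae_of_all _ fun f => by positivity)] at hl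
  exact (ENNReal.ofReal_le_ofReal_iff hB0).mp hl

end
end

section
open MeasureTheory ProbabilityTheory Filter Set
open scoped RealInnerProductSpace Topology ENNReal

section
variable {d M N : ℕ} {α K : ℝ} {a : ℝ → ℝ} {μ : Measure (Fld d)} {w : Fin M → ℝ}
  {z : Fin M → ES d} {m : ES d → ℝ}

/-- material derivative of the averaged field -/
noncomputable def mD (w : Fin M → ℝ) (z : Fin M → ES d) (v : ES d) (δ : ℝ) (f : Fld d) : ES d :=
  fderiv ℝ (Gop w z f) 0 (v + δ • f.1 0)

lemma fderiv_expand (L : ES d →L[ℝ] ES d) (u : ES d) (i : Fin d) :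
    L u i = ∑ l, u l * L (EuclideanSpace.single l 1) i := by
  have hu : u = ∑ l, u l • EuclideanSpace.single l (1:ℝ) := by
    ext j
    simp [Finset.sum_apply, Pi.single_apply]
  conv_lhs => rw [hu]
  rw [map_sum]
  simp

lemma mD_apply (w : Fin M → ℝ) (z : Fin M → ES d) (v : ES d) (δ : ℝ) (f : Fld d) (i : Fin d) :
    mD w z v δ f i = ∑ l, (v l + δ * f.1 0 l) * dG w z l i f := by
  rw [mD, fderiv_expand]
  simp [dG]

lemma mD_measurable (w : Fin M → ℝ) (z : Fin M → ES d) (v : ES d) (δ : ℝ) :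
    Measurable (mD w z v δ) := by
  have h : ∀ i, Measurable (fun f => mD w z v δ f i) := by
    intro i
    simp_rw [mD_apply]
    refine Finset.measurable_sum _ fun l _ => ?_
    have h : Measurable (fun y : ES d => y l) := by fun_prop
    exact (((h.comp (Fld.measurable_apply 0)).const_mul δ).const_add (v l)).mul
      (dG_measurable w z l i)
  have h2 : Measurable (fun f => WithLp.toLp 2 (fun i => mD w z v δ f i)) :=
    (WithLp.measurable_toLp 2 _).comp (measurable_pi_lambda _ h)
  exact h2

lemma mD_bound (w : Fin M → ℝ) (z : Fin M → ES d) {v : ES d} (hv : ‖v‖ = 1) {δ : ℝ}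
    (hδ : δ ∈ Ioc (0:ℝ) 1) {lam : ℝ} (hl : 0 < lam) (f : Fld d) :
    ‖mD w z v δ f‖ ^ 2 ≤ ∑ i, ∑ l, ((1 + (d:ℝ)) * lam * dG w z l i f ^ 4 +
      lam⁻¹ * (1 + ∑ q, f.1 0 q ^ 4)) := by
  have hu : ∑ l, (v l + δ * f.1 0 l) ^ 2 ≤ 2 + 2 * ∑ q, f.1 0 q ^ 2 := by
    have h1 : ∑ l, v l ^ 2 = 1 := by
      rw [← EuclideanSpace.real_norm_sq_eq, hv]; norm_num
    calc ∑ l, (v l + δ * f.1 0 l) ^ 2 ≤ ∑ l, (2 * v l ^ 2 + 2 * f.1 0 l ^ 2) := by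
          refine Finset.sum_le_sum fun l _ => ?_
          have hd2 : δ ^ 2 ≤ 1 := pow_le_one₀ hδ.1.le hδ.2
          nlinarith [sq_nonneg (v l - δ * f.1 0 l), sq_nonneg (f.1 0 l)]
      _ = _ := by rw [Finset.sum_add_distrib, ← Finset.mul_sum, ← Finset.mul_sum, h1]; ring
  have ag : ∀ x y : ℝ, 2 * (x ^ 2 * y ^ 2) ≤ lam * x ^ 4 + lam⁻¹ * y ^ 4 := by
    intro x y
    have h1 : lam * x ^ 4 + lam⁻¹ * y ^ 4 - 2 * (x ^ 2 * y ^ 2) =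
        lam⁻¹ * (lam * x ^ 2 - y ^ 2) ^ 2 := by
      field_simp; ring
    have h2 : 0 ≤ lam⁻¹ * (lam * x ^ 2 - y ^ 2) ^ 2 := by positivity
    linarith
  rw [EuclideanSpace.real_norm_sq_eq]
  refine Finset.sum_le_sum fun i _ => ?_
  rw [mD_apply]
  calc (∑ l, (v l + δ * f.1 0 l) * dG w z l i f) ^ 2
      ≤ (∑ l, (v l + δ * f.1 0 l) ^ 2) * ∑ l, dG w z l i f ^ 2 :=
        Finset.sum_mul_sq_le_sq_mul_sq _ _ _
    _ ≤ (2 + 2 * ∑ q, f.1 0 q ^ 2) * ∑ l, dG w z l i f ^ 2 := by gcongr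
    _ = ∑ l, (2 * (dG w z l i f ^ 2 * 1 ^ 2) + ∑ q, 2 * (dG w z l i f ^ 2 * f.1 0 q ^ 2)) := by
        rw [Finset.mul_sum]
        refine Finset.sum_congr rfl fun l _ => ?_
        rw [← Finset.mul_sum, ← Finset.mul_sum]; ring
    _ ≤ ∑ l, ((lam * dG w z l i f ^ 4 + lam⁻¹ * 1 ^ 4) +
          ∑ q, (lam * dG w z l i f ^ 4 + lam⁻¹ * f.1 0 q ^ 4)) := by
        refine Finset.sum_le_sum fun l _ => add_le_add (ag _ _) (Finset.sum_le_sum fun q _ => ag _ _)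
    _ = _ := by
        refine Finset.sum_congr rfl fun l _ => ?_
        rw [Finset.sum_add_distrib, ← Finset.mul_sum _ _ lam⁻¹]
        simp only [Finset.sum_const, Finset.card_univ, Fintype.card_fin, nsmul_eq_mul]
        ring

/-- the constant in the gradient bound -/
noncomputable def Cg (d : ℕ) (α K : ℝ) (a : ℝ → ℝ) : ℝ :=
  (d:ℝ) ^ 2 * ((1 + (d:ℝ)) * (C4 * (64 * K ^ 2) ^ 2) + (1 + ∑ q : Fin d,
    C4 * (Vq α a q (fun _ : Fin 1 => 1) (fun _ => 0)) ^ 2))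

lemma Cg_nonneg : 0 ≤ Cg d α K a := by
  unfold Cg
  have := C4_nonneg
  have : 0 ≤ ∑ q : Fin d, C4 * (Vq α a q (fun _ : Fin 1 => 1) (fun _ => 0)) ^ 2 :=
    Finset.sum_nonneg fun q _ => by positivity
  positivity

lemma mD_sq [IsProbabilityMeasure μ] (h : GaussLaw d α a μ) (hf : Fej d K N w z m)
    (hN : 1 ≤ N)
    (hs : Spec d α K a) (hσ : 0 < ∑ i, sg α a m i) {v : ES d} (hv : ‖v‖ = 1) {δ : ℝ}
    (hδ : δ ∈ Ioc (0:ℝ) 1) :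
    Integrable (fun f => ‖mD w z v δ f‖ ^ 2) μ ∧
    ∫ f, ‖mD w z v δ f‖ ^ 2 ∂μ ≤ Cg d α K a * (∑ i, sg α a m i) / N ^ 2 := by
  set σ := ∑ i, sg α a m i with hσd
  have hN0 : (0:ℝ) < N := by exact_mod_cast hN
  set lam : ℝ := N ^ 2 / σ with hlam
  have hl : 0 < lam := by positivity
  have hF4 : ∀ q : Fin d, Integrable (fun f : Fld d => f.1 0 q ^ 4) μ ∧
      ∫ f : Fld d, f.1 0 q ^ 4 ∂μ = C4 * (Vq α a q (fun _ : Fin 1 => 1) (fun _ => 0)) ^ 2 := by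
    intro q
    have h1 := lin_int4 h (hs.int q) (fun _ : Fin 1 => 1) (fun _ => 0)
    have h2 := lin_four h (hs.int q) hs.nonneg (fun _ : Fin 1 => 1) (fun _ => 0)
    simp only [Finset.univ_unique, Finset.sum_const, Finset.card_singleton, one_smul, one_mul]
      at h1 h2
    exact ⟨h1, h2⟩
  have hFs : Integrable (fun f : Fld d => 1 + ∑ q, f.1 0 q ^ 4) μ :=
    (integrable_const (1:ℝ)).add (integrable_finsetSum _ fun q _ => (hF4 q).1)
  have hterm : ∀ i l, Integrable (fun f : Fld d => (1 + (d:ℝ)) * lam * dG w z l i f ^ 4 +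
      lam⁻¹ * (1 + ∑ q, f.1 0 q ^ 4)) μ := fun i l =>
    ((dG_four h hf hs l i).1.const_mul _).add
      (hFs.const_mul _)
  have hQ : Integrable (fun f : Fld d => ∑ i, ∑ l, ((1 + (d:ℝ)) * lam * dG w z l i f ^ 4 +
      lam⁻¹ * (1 + ∑ q, f.1 0 q ^ 4))) μ :=
    integrable_finsetSum _ fun i _ => integrable_finsetSum _ fun l _ => hterm i l
  have hIntg : Integrable (fun f => ‖mD w z v δ f‖ ^ 2) μ := by
    refine hQ.mono' ((mD_measurable w z v δ).norm.pow_const 2).aestronglyMeasurable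
      (ae_of_all _ fun f => ?_)
    rw [Real.norm_of_nonneg (by positivity)]
    exact mD_bound w z hv hδ hl f
  refine ⟨hIntg, ?_⟩
  calc ∫ f, ‖mD w z v δ f‖ ^ 2 ∂μ
      ≤ ∫ f : Fld d, ∑ i, ∑ l, ((1 + (d:ℝ)) * lam * dG w z l i f ^ 4 +
      lam⁻¹ * (1 + ∑ q, f.1 0 q ^ 4)) ∂μ := integral_mono hIntg hQ (fun f => mD_bound w z hv hδ hl f)
    _ = ∑ i, ∑ l, ((1 + (d:ℝ)) * lam * ∫ f, dG w z l i f ^ 4 ∂μ +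
      lam⁻¹ * (1 + ∑ q : Fin d, C4 * (Vq α a q (fun _ : Fin 1 => 1) (fun _ => 0)) ^ 2)) := by
        rw [integral_finsetSum _ fun i _ => integrable_finsetSum _ fun l _ => hterm i l]
        refine Finset.sum_congr rfl fun i _ => ?_
        rw [integral_finsetSum _ fun l _ => hterm i l]
        refine Finset.sum_congr rfl fun l _ => ?_
        rw [integral_add ((dG_four h hf hs l i).1.const_mul _)
          (hFs.const_mul _),
          integral_const_mul, integral_const_mul, integral_add (integrable_const 1)
            (integrable_finsetSum _ fun q _ => (hF4 q).1),
            integral_finsetSum _ fun q _ => (hF4 q).1]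
        congr 3
        · simp
        · exact Finset.sum_congr rfl fun q _ => (hF4 q).2
    _ ≤ ∑ i : Fin d, ∑ l : Fin d, ((1 + (d:ℝ)) * lam * (C4 * (64 * K ^ 2 / N ^ 2 * σ) ^ 2) +
      lam⁻¹ * (1 + ∑ q : Fin d, C4 * (Vq α a q (fun _ : Fin 1 => 1) (fun _ => 0)) ^ 2)) := by
        refine Finset.sum_le_sum fun i _ => Finset.sum_le_sum fun l _ => ?_
        gcongr
        refine (dG_four h hf hs l i).2.trans ?_
        have h1 := sg_nonneg hf hs i
        have h2 : sg α a m i ≤ σ :=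
          Finset.single_le_sum (fun i _ => sg_nonneg hf hs i) (Finset.mem_univ i)
        have := C4_nonneg
        gcongr
    _ = _ := by
        simp only [Finset.sum_const, Finset.card_univ, Fintype.card_fin, nsmul_eq_mul]
        rw [Cg, hlam]
        field_simp

lemma sg_lower (hd : 2 ≤ d) (hα1 : 1 / 2 < α) (hK : 0 < K) (hN : 1 ≤ N)
    (hf : Fej d K N w z m) (hs : Spec d α K a)
    (hSi : Integrable (Srad d α a))
    (ha : ∀ r, 0 ≤ r → r ≤ K / N → 1 / 2 ≤ a r) :
    (1/4 : ℝ) ^ d * (1/2) * (volume (Metric.ball (0 : ES d) 1)).toReal * (K / N) ^ (2 - 2 * α) ≤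
      ∑ i, sg α a m i := by
  have hN0 : (0:ℝ) < N := by exact_mod_cast hN
  set r : ℝ := K / N with hr
  have hr0 : 0 < r := by positivity
  have hd2 : (2:ℝ) ≤ d := by exact_mod_cast hd
  have h1 : ∑ i, sg α a m i = ∫ k : ES d, m k * ∑ i, rho d α a i k := by
    unfold sg
    rw [← integral_finsetSum _ fun i _ => sg_int hf hs i]
    simp_rw [Finset.mul_sum]
  have hsum : ∀ k : ES d, Srad d α a k ≤ ∑ i, rho d α a i k := by
    intro k
    unfold rho
    rw [← Finset.mul_sum, Finset.sum_sub_distrib, ← Finset.sum_div]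
    have h2 : (∑ i, k i * k i) / ‖k‖ ^ 2 ≤ 1 := by
      have : ∑ i, k i * k i = ‖k‖ ^ 2 := by
        rw [EuclideanSpace.real_norm_sq_eq]
        exact Finset.sum_congr rfl fun i _ => (sq (k i)).symm
      rw [this]
      exact div_self_le_one _
    simp only [Finset.sum_const, Finset.card_univ, Fintype.card_fin, nsmul_eq_mul, mul_one]
    exact le_mul_of_one_le_right (Srad_nonneg hs.nonneg k) (by linarith)
  have hIntg : Integrable (fun k : ES d => m k * ∑ i, rho d α a i k) := by
    simp_rw [Finset.mul_sum]
    exact integrable_finsetSum _ fun i _ => sg_int hf hs i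
  set c0 : ℝ := (1/4 : ℝ) ^ d * ((1/2) * r ^ (-(2 * α + (d : ℝ) - 2))) with hc0
  have hc0' : 0 ≤ c0 := by positivity
  have hlow : ∀ᵐ k : ES d, k ∈ Metric.closedBall (0 : ES d) r →
      c0 ≤ m k * ∑ i, rho d α a i k := by
    have hne : ∀ᵐ k : ES d, k ≠ 0 := by
      have : Nontrivial (ES d) := by
        have : Nonempty (Fin d) := ⟨⟨0, by omega⟩⟩
        infer_instance
      exact Measure.ae_ne volume 0
    filter_upwards [hne] with k hk hkb
    have hkr : ‖k‖ ≤ r := by simpa using hkb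
    have hk0 : 0 < ‖k‖ := norm_pos_iff.mpr hk
    have hS : (1/2) * r ^ (-(2 * α + (d : ℝ) - 2)) ≤ Srad d α a k := by
      unfold Srad
      have e1 := ha ‖k‖ hk0.le hkr
      have e2 : r ^ (-(2 * α + (d : ℝ) - 2)) ≤ ‖k‖ ^ (-(2 * α + (d : ℝ) - 2)) :=
        Real.rpow_le_rpow_of_nonpos hk0 hkr (by linarith)
      gcongr
    calc c0 ≤ m k * Srad d α a k := by
          rw [hc0]
          exact mul_le_mul (hf.low k hkr) hS (by positivity) (hf.nonneg k)
      _ ≤ _ := mul_le_mul_of_nonneg_left (hsum k) (hf.nonneg k)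
  rw [h1]
  have hb : volume.real (Metric.closedBall (0 : ES d) r) =
      r ^ d * (volume (Metric.ball (0 : ES d) 1)).toReal := by
    rw [Measure.real, Measure.addHaar_closedBall _ _ hr0.le, ENNReal.toReal_mul,
      ENNReal.toReal_ofReal (by positivity)]
    simp
  calc (1/4 : ℝ) ^ d * (1/2) * (volume (Metric.ball (0 : ES d) 1)).toReal * r ^ (2 - 2 * α)
      = c0 * volume.real (Metric.closedBall (0 : ES d) r) := by
        rw [hb, hc0]
        have : r ^ (2 - 2 * α) = r ^ (-(2 * α + (d : ℝ) - 2)) * r ^ d := by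
          rw [← Real.rpow_natCast, ← Real.rpow_add hr0]
          congr 1; ring
        rw [this]; ring
    _ = ∫ k in Metric.closedBall (0 : ES d) r, c0 := by
        rw [setIntegral_const, smul_eq_mul, mul_comm]
    _ ≤ ∫ k in Metric.closedBall (0 : ES d) r, m k * ∑ i, rho d α a i k := by
        refine setIntegral_mono_ae_restrict ?_ hIntg.integrableOn ?_
        · exact integrableOn_const measure_closedBall_lt_top.ne
        · exact (ae_restrict_iff' measurableSet_closedBall).mpr hlow
    _ ≤ _ := by
        refine setIntegral_le_integral hIntg (ae_of_all _ fun k => ?_)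
        exact mul_nonneg (hf.nonneg k) (Finset.sum_nonneg fun i _ => rho_nonneg hs.nonneg i k)

end

/-- Summary of all moment bounds. -/
lemma moments {d : ℕ} (hd : 2 ≤ d)
    {α : ℝ} (hα1 : 1 / 2 < α) (hα2 : α < 1)
    {K : ℝ} (hK : 0 < K)
    {a : ℝ → ℝ}
    (ha_nonneg : ∀ r : ℝ, 0 ≤ r → 0 ≤ a r)
    (ha_bdd : ∃ M : ℝ, ∀ r : ℝ, 0 ≤ r → a r ≤ M)
    (ha_meas : Measurable a)
    (ha_supp : ∀ r : ℝ, K < r → a r = 0)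
    (ha_cont : ContinuousAt a 0)
    (ha_one : a 0 = 1)
    {v : ES d} (hv : ‖v‖ = 1) {μ : Measure (Fld d)} [IsProbabilityMeasure μ]
    (h : GaussLaw d α a μ) :
    ∃ C c T0 : ℝ, 0 ≤ C ∧ 0 < c ∧ 1 ≤ T0 ∧ ∀ T, T0 ≤ T →
      ∃ (M : ℕ) (w : Fin M → ℝ) (z : Fin M → ES d) (σ : ℝ), 
        c * T ^ (-(2 - 2 * α)) ≤ σ ∧
        Integrable (fun f : Fld d => ⟪f.1 0, Gop w z f 0⟫) μ ∧
        ∫ f : Fld d, ⟪f.1 0, Gop w z f 0⟫ ∂μ = σ ∧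
        Integrable (fun f : Fld d => ‖Gop w z f 0‖ ^ 2) μ ∧
        ∫ f : Fld d, ‖Gop w z f 0‖ ^ 2 ∂μ ≤ σ ∧
        ∀ δ ∈ Ioc (0:ℝ) 1, Integrable (fun f => ‖mD w z v δ f‖ ^ 2) μ ∧
          ∫ f, ‖mD w z v δ f‖ ^ 2 ∂μ ≤ C * σ / T ^ 2 := by
  have hSi : Integrable (Srad d α a) := Srad_integrable hd hα2 hK ha_nonneg ha_bdd ha_meas ha_supp
  have hs : Spec d α K a := ⟨fun i => rho_integrable hSi ha_nonneg ha_meas i, ha_nonneg, ha_supp⟩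
  obtain ⟨r0, hr0, hr⟩ : ∃ r0 > 0, ∀ r, |r| < r0 → 1 / 2 ≤ a r := by
    have := Metric.continuousAt_iff.mp ha_cont (1/2) (by norm_num)
    obtain ⟨r0, hr0, hr⟩ := this
    refine ⟨r0, hr0, fun r hrr => ?_⟩
    have h1 := hr (x := r) (by simpa using hrr)
    rw [ha_one, Real.dist_eq, abs_lt] at h1
    linarith [h1.1]
  set c1 : ℝ := (1/4 : ℝ) ^ d * (1/2) * (volume (Metric.ball (0 : ES d) 1)).toReal with hc1
  have hc1p : 0 < c1 := by
    have : 0 < (volume (Metric.ball (0 : ES d) 1)).toReal :=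
      ENNReal.toReal_pos (Metric.measure_ball_pos _ _ one_pos).ne' measure_ball_lt_top.ne
    positivity
  refine ⟨Cg d α K a, c1 * (K / 2) ^ (2 - 2 * α), max 1 (2 * (K / r0)), Cg_nonneg, by positivity,
    le_max_left _ _, ?_⟩
  intro T hT
  have hT1 : 1 ≤ T := (le_max_left _ _).trans hT
  have hT2 : 2 * (K / r0) ≤ T := (le_max_right _ _).trans hT
  set N := ⌈T⌉₊ with hN
  have hN1 : 1 ≤ N := Nat.one_le_ceil_iff.mpr (by linarith)
  have hN0 : (0:ℝ) < N := by exact_mod_cast hN1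
  have hNT : T ≤ N := Nat.le_ceil T
  have hNT2 : (N:ℝ) ≤ 2 * T := by
    have := Nat.ceil_lt_add_one (show 0 ≤ T by linarith)
    linarith
  obtain ⟨M, w, z, m, f1, f2, f3, f4, f5, f6⟩ := fejer d hK N hN1
  have hf : Fej d K N w z m := ⟨f1, f2, f3, f4, f5, f6⟩
  have hlow := sg_lower hd hα1 hK hN1 hf hs hSi (by
    intro r h0 h1
    refine hr r ?_
    rw [abs_of_nonneg h0]
    refine lt_of_le_of_lt h1 ?_
    rw [div_lt_iff₀ hN0]
    have : K / r0 < N := by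
      have : 0 < K / r0 := by positivity
      linarith
    rw [div_lt_iff₀ hr0] at this
    linarith)
  have hσ : c1 * (K / 2) ^ (2 - 2 * α) * T ^ (-(2 - 2 * α)) ≤ ∑ i, sg α a m i := by
    refine le_trans ?_ hlow
    have h1 : (K / 2) ^ (2 - 2 * α) * T ^ (-(2 - 2 * α)) = (K / 2 / T) ^ (2 - 2 * α) := by
      rw [Real.div_rpow (x := K / 2) (by positivity) (by positivity), Real.rpow_neg (by positivity)]
      rfl
    rw [mul_assoc, h1]
    refine mul_le_mul_of_nonneg_left ?_ hc1p.le
    refine Real.rpow_le_rpow (by positivity) ?_ (by linarith)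
    rw [div_div]
    gcongr
  have hσp : 0 < ∑ i, sg α a m i := lt_of_lt_of_le (by positivity) hσ
  refine ⟨M, w, z, ∑ i, sg α a m i, hσ, (cross h hf hs).1, (cross h hf hs).2, (Gsq h hf hs).1,
    (Gsq h hf hs).2, fun δ hδ => ?_⟩
  refine ⟨(mD_sq h hf hN1 hs hσp hv hδ).1, (mD_sq h hf hN1 hs hσp hv hδ).2.trans ?_⟩
  have := Cg_nonneg (d := d) (α := α) (K := K) (a := a)
  gcongr
end

section
open MeasureTheory ProbabilityTheory Filter Set
open scoped RealInnerProductSpace Topology ENNReal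

section
variable {d M : ℕ}

lemma mD_shift (w : Fin M → ℝ) (z : Fin M → ES d) (v : ES d) (δ : ℝ) (f : Fld d) (x : ES d) :
    mD w z v δ (f.shift x) = fderiv ℝ (Gop w z f) x (drift v δ f x) := by
  have : Gop w z (f.shift x) = fun y => Gop w z f (x + y) := by
    funext y; exact Gop_shift w z f x y
  rw [mD, this, fderiv_comp_add_left]
  simp [drift]

lemma ip_young {E : Type*} [NormedAddCommGroup E] [InnerProductSpace ℝ E] (x y : E) {θ : ℝ}
    (hθ : 0 < θ) : |⟪x, y⟫| ≤ θ / 2 * ‖x‖ ^ 2 + ‖y‖ ^ 2 / (2 * θ) := by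
  have h1 := abs_real_inner_le_norm x y
  have h2 : θ / 2 * ‖x‖ ^ 2 + ‖y‖ ^ 2 / (2 * θ) - ‖x‖ * ‖y‖ = (θ * ‖x‖ - ‖y‖) ^ 2 / (2 * θ) := by
    field_simp; ring
  have h3 : 0 ≤ (θ * ‖x‖ - ‖y‖) ^ 2 / (2 * θ) := by positivity
  linarith

/-- The pathwise estimate. -/
lemma pathwise (w : Fin M → ℝ) (z : Fin M → ES d) (v : ES d) (δ : ℝ) (f : Fld d)
    (X : ℝ → ES d) (h0 : X 0 = 0) (hX : ∀ s, 0 ≤ s → HasDerivAt X (drift v δ f (X s)) s)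
    {T θ : ℝ} (hT : 0 < T) (hθ : 0 < θ) :
    ∫ s in Ioc 0 T, (T - s) * δ * ⟪(f.shift (X s)).1 0, Gop w z (f.shift (X s)) 0⟫ ≤
      ∫ s in Ioc 0 T, (θ * ‖X s - s • v‖ ^ 2 + ‖Gop w z (f.shift (X s)) 0‖ ^ 2 / (2 * θ) +
        T ^ 2 / (2 * θ) * ‖mD w z v δ (f.shift (X s))‖ ^ 2) := by
  simp only [mD_shift, Gop_shift, Fld.shift_apply, add_zero]
  have hXc : ContinuousOn X (Icc 0 T) :=
    fun s hs => (hX s hs.1).continuousAt.continuousWithinAt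
  have hfc : ContinuousOn (fun s => f.1 (X s)) (Icc 0 T) := f.cont.comp_continuousOn hXc
  have hbc : ContinuousOn (fun s => drift v δ f (X s)) (Icc 0 T) :=
    (drift_contDiff v δ f).continuous.comp_continuousOn hXc
  have hgc : ContinuousOn (fun s => Gop w z f (X s)) (Icc 0 T) :=
    (Gop_contDiff w z f).continuous.comp_continuousOn hXc
  have hDc : ContinuousOn (fun s => fderiv ℝ (Gop w z f) (X s) (drift v δ f (X s))) (Icc 0 T) :=
    (((Gop_contDiff w z f).continuous_fderiv (by norm_num)).comp_continuousOn hXc).clm_apply hbc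
  have hyc : ContinuousOn (fun s => X s - s • v) (Icc 0 T) :=
    hXc.sub (by fun_prop)
  set A : ℝ → ℝ := fun s => (T - s) * δ * ⟪f.1 (X s), Gop w z f (X s)⟫ with hA
  set W' : ℝ → ℝ := fun s => - ⟪X s - s • v, Gop w z f (X s)⟫ + A s +
    (T - s) * ⟪X s - s • v, fderiv ℝ (Gop w z f) (X s) (drift v δ f (X s))⟫ with hW'
  set R : ℝ → ℝ := fun s => θ * ‖X s - s • v‖ ^ 2 + ‖Gop w z f (X s)‖ ^ 2 / (2 * θ) +
        T ^ 2 / (2 * θ) * ‖fderiv ℝ (Gop w z f) (X s) (drift v δ f (X s))‖ ^ 2 with hR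
  have hTc : ContinuousOn (fun s : ℝ => T - s) (Icc 0 T) := by fun_prop
  have hAc : ContinuousOn A (Icc 0 T) :=
    (hTc.mul continuousOn_const).mul (hfc.inner hgc)
  have hWc : ContinuousOn W' (Icc 0 T) :=
    ((hyc.inner hgc).neg.add hAc).add (hTc.mul (hyc.inner hDc))
  have hRc : ContinuousOn R (Icc 0 T) :=
    ((continuousOn_const.mul (hyc.norm.pow 2)).add ((hgc.norm.pow 2).div_const _)).add
      (continuousOn_const.mul (hDc.norm.pow 2))
  have hFTC : ∫ s in (0:ℝ)..T, W' s = 0 := by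
    have := intervalIntegral.integral_eq_sub_of_hasDerivAt
      (f := fun s => (T - s) * ⟪X s - s • v, Gop w z f (X s)⟫) (f' := W') (a := 0) (b := T) ?_ ?_
    · rw [this]; simp [h0]
    · intro s hs
      rw [uIcc_of_le hT.le] at hs
      have h1 : HasDerivAt (fun s => T - s) (-1) s := by
        simpa using (hasDerivAt_id s).const_sub T
      have h2 : HasDerivAt (fun s => X s - s • v) (drift v δ f (X s) - (1:ℝ) • v) s :=
        (hX s hs.1).sub ((hasDerivAt_id s).smul_const v)
      have h3 : HasDerivAt (fun s => Gop w z f (X s))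
          (fderiv ℝ (Gop w z f) (X s) (drift v δ f (X s))) s :=
        (((Gop_contDiff w z f).differentiable (by norm_num)) (X s)).hasFDerivAt.comp_hasDerivAt s
          (hX s hs.1)
      have h4 := h1.mul (h2.inner ℝ h3)
      refine h4.congr_deriv ?_
      have h5 : drift v δ f (X s) - (1:ℝ) • v = δ • f.1 (X s) := by
        simp [drift]
      rw [h5]
      simp only [hW', hA, inner_smul_left]
      simp only [conj_trivial]
      ring
    · rw [intervalIntegrable_iff_integrableOn_Icc_of_le hT.le]
      exact hWc.integrableOn_Icc
  have hAi : IntegrableOn A (Ioc 0 T) := hAc.integrableOn_Icc.mono_set Ioc_subset_Icc_self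
  have hWi : IntegrableOn W' (Ioc 0 T) := hWc.integrableOn_Icc.mono_set Ioc_subset_Icc_self
  have hRi : IntegrableOn R (Ioc 0 T) := hRc.integrableOn_Icc.mono_set Ioc_subset_Icc_self
  rw [intervalIntegral.integral_of_le hT.le] at hFTC
  calc ∫ s in Ioc 0 T, A s ≤ ∫ s in Ioc 0 T, (W' s + R s) := by
        refine setIntegral_mono_on hAi (hWi.add hRi) measurableSet_Ioc fun s hs => ?_
        have h1 := ip_young (X s - s • v) (Gop w z f (X s)) hθ
        have h2 := ip_young (X s - s • v)
          ((T - s) • fderiv ℝ (Gop w z f) (X s) (drift v δ f (X s))) hθ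
        rw [inner_smul_right, norm_smul, mul_pow, Real.norm_eq_abs, sq_abs] at h2
        have h3 : (T - s) ^ 2 * ‖fderiv ℝ (Gop w z f) (X s) (drift v δ f (X s))‖ ^ 2 / (2 * θ) ≤
          T ^ 2 / (2 * θ) * ‖fderiv ℝ (Gop w z f) (X s) (drift v δ f (X s))‖ ^ 2 := by
          rw [mul_div_assoc, div_mul_eq_mul_div, ← mul_div_assoc]
          have : (T - s) ^ 2 ≤ T ^ 2 := by
            have := hs.1; have := hs.2
            apply pow_le_pow_left₀ <;> linarith
          gcongr
        have h4 := le_abs_self ⟪X s - s • v, Gop w z f (X s)⟫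
        have h5 := neg_abs_le ((T - s) * ⟪X s - s • v, fderiv ℝ (Gop w z f) (X s) (drift v δ f (X s))⟫)
        simp only [hW', hR]
        linarith
    _ = ∫ s in Ioc 0 T, R s := by
        rw [integral_add hWi hRi, hFTC, zero_add]

end

section
variable {d : ℕ} {Ω : Type*} [MeasurableSpace Ω] {P : Measure Ω} [IsProbabilityMeasure P]
  {Fl : Ω → Fld d} {X : Ω → ℝ → ES d} {T : ℝ}

lemma env_measurable (hFl : Measurable Fl) (hX : Measurable (Function.uncurry X)) :
    Measurable (fun p : ℝ × Ω => (Fl p.2).shift (X p.2 p.1)) :=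
  Fld.measurable_shift.comp ((hX.comp measurable_swap).prodMk (hFl.comp measurable_snd))

lemma stat_integrable (hFl : Measurable Fl) (hX : Measurable (Function.uncurry X))
    (hL : ∀ s, 0 ≤ s → P.map (fun ω => (Fl ω).shift (X ω s)) = P.map Fl)
    {Φ : Fld d → ℝ} (hΦm : Measurable Φ) (hΦ : Integrable Φ (P.map Fl)) :
    (∀ s, 0 ≤ s → ∫ ω, Φ ((Fl ω).shift (X ω s)) ∂P = ∫ f, Φ f ∂(P.map Fl)) ∧
    Integrable (fun p : ℝ × Ω => Φ ((Fl p.2).shift (X p.2 p.1)))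
      ((volume.restrict (Ioc 0 T)).prod P) := by
  have hm : ∀ s, Measurable (fun ω => (Fl ω).shift (X ω s)) := fun s =>
    (env_measurable hFl hX).comp measurable_prodMk_left
  have hi : ∀ s, 0 ≤ s → Integrable (fun ω => Φ ((Fl ω).shift (X ω s))) P := by
    intro s hs
    have h1 := hL s hs
    rw [← h1] at hΦ
    exact (integrable_map_measure hΦm.aestronglyMeasurable (hm s).aemeasurable).mp hΦ
  have hv : ∀ (Ψ : Fld d → ℝ), Measurable Ψ → ∀ s, 0 ≤ s →
      ∫ ω, Ψ ((Fl ω).shift (X ω s)) ∂P = ∫ f, Ψ f ∂(P.map Fl) := by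
    intro Ψ hΨ s hs
    rw [← hL s hs, integral_map (hm s).aemeasurable hΨ.aestronglyMeasurable]
  refine ⟨hv Φ hΦm, ?_⟩
  have hme : Measurable (fun p : ℝ × Ω => Φ ((Fl p.2).shift (X p.2 p.1))) :=
    hΦm.comp (env_measurable hFl hX)
  rw [integrable_prod_iff hme.aestronglyMeasurable]
  constructor
  · exact (ae_restrict_iff' measurableSet_Ioc).mpr (ae_of_all _ fun s hs => hi s hs.1.le)
  · have : IntegrableOn (fun _ : ℝ => ∫ f, ‖Φ f‖ ∂(P.map Fl)) (Ioc 0 T) :=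
      integrableOn_const measure_Ioc_lt_top.ne
    refine IntegrableOn.congr_fun this (fun s hs => ?_) measurableSet_Ioc
    exact (hv (fun f => ‖Φ f‖) hΦm.norm s hs.1.le).symm

/-- The averaged main estimate. -/
lemma main_est {M : ℕ} (hFl : Measurable Fl) (hX : Measurable (Function.uncurry X))
    (hL : ∀ s, 0 ≤ s → P.map (fun ω => (Fl ω).shift (X ω s)) = P.map Fl)
    {v : ES d} {δ : ℝ}
    (hsol : ∀ᵐ ω ∂P, X ω 0 = 0 ∧ ∀ s, 0 ≤ s → HasDerivAt (X ω) (drift v δ (Fl ω) (X ω s)) s)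
    (hy_int : ∀ s : ℝ, Integrable (fun ω => ‖X ω s - s • v‖ ^ 2) P)
    (hy_loc : ∀ T : ℝ, IntegrableOn (fun s => ∫ ω, ‖X ω s - s • v‖ ^ 2 ∂P) (Icc 0 T) volume)
    {w : Fin M → ℝ} {z : Fin M → ES d} {σ C θ : ℝ} (hT : 0 < T) (hθ : 0 < θ)
    (h1 : Integrable (fun f : Fld d => ⟪f.1 0, Gop w z f 0⟫) (P.map Fl))
    (h2 : ∫ f : Fld d, ⟪f.1 0, Gop w z f 0⟫ ∂(P.map Fl) = σ)
    (h3 : Integrable (fun f : Fld d => ‖Gop w z f 0‖ ^ 2) (P.map Fl))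
    (h4 : ∫ f : Fld d, ‖Gop w z f 0‖ ^ 2 ∂(P.map Fl) ≤ σ)
    (h5 : Integrable (fun f => ‖mD w z v δ f‖ ^ 2) (P.map Fl))
    (h6 : ∫ f, ‖mD w z v δ f‖ ^ 2 ∂(P.map Fl) ≤ C * σ / T ^ 2) :
    δ * σ * T ^ 2 / 2 ≤ θ * (∫ s in (0:ℝ)..T, ∫ ω, ‖X ω s - s • v‖ ^ 2 ∂P) +
      T * σ * (1 + C) / (2 * θ) := by
  set κ := (volume.restrict (Ioc 0 T) : Measure ℝ) with hκ
  have m1 : Measurable (fun f : Fld d => ⟪f.1 0, Gop w z f 0⟫) :=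
    (Fld.measurable_apply 0).inner (Gop_measurable w z 0)
  have m3 : Measurable (fun f : Fld d => ‖Gop w z f 0‖ ^ 2) := (Gop_measurable w z 0).norm.pow_const 2
  have m5 : Measurable (fun f : Fld d => ‖mD w z v δ f‖ ^ 2) := (mD_measurable w z v δ).norm.pow_const 2
  obtain ⟨v1, i1⟩ := stat_integrable (T := T) hFl hX hL m1 h1
  obtain ⟨v3, i3⟩ := stat_integrable (T := T) hFl hX hL m3 h3
  obtain ⟨v5, i5⟩ := stat_integrable (T := T) hFl hX hL m5 h5
  have iA : Integrable (fun p : ℝ × Ω => (T - p.1) * δ *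
      ⟪((Fl p.2).shift (X p.2 p.1)).1 0, Gop w z ((Fl p.2).shift (X p.2 p.1)) 0⟫) (κ.prod P) := by
    refine i1.bdd_mul (c := T * |δ|) (by fun_prop) ?_
    have : ∀ᵐ p ∂(κ.prod P), p.1 ∈ Ioc 0 T := by
      have h7 : ∀ᵐ s ∂κ, s ∈ Ioc 0 T := ae_restrict_mem measurableSet_Ioc
      exact Measure.quasiMeasurePreserving_fst.ae h7
    filter_upwards [this] with p hp
    rw [norm_mul, Real.norm_eq_abs, Real.norm_eq_abs]
    gcongr
    rw [abs_le]
    constructor <;> linarith [hp.1, hp.2]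
  have iy : Integrable (fun p : ℝ × Ω => ‖X p.2 p.1 - p.1 • v‖ ^ 2) (κ.prod P) := by
    have hm : Measurable (fun p : ℝ × Ω => ‖X p.2 p.1 - p.1 • v‖ ^ 2) := by
      have : Measurable (fun p : ℝ × Ω => X p.2 p.1) := hX.comp measurable_swap
      exact (this.sub (measurable_fst.smul_const v)).norm.pow_const 2
    rw [integrable_prod_iff hm.aestronglyMeasurable]
    refine ⟨ae_of_all _ fun s => hy_int s, ?_⟩
    have := (hy_loc T).mono_set (Ioc_subset_Icc_self (a := (0:ℝ)) (b := T))
    refine this.congr (ae_of_all _ fun s => ?_)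
    simp
  have iR : Integrable (fun p : ℝ × Ω => θ * ‖X p.2 p.1 - p.1 • v‖ ^ 2 +
      ‖Gop w z ((Fl p.2).shift (X p.2 p.1)) 0‖ ^ 2 / (2 * θ) +
        T ^ 2 / (2 * θ) * ‖mD w z v δ ((Fl p.2).shift (X p.2 p.1))‖ ^ 2) (κ.prod P) :=
    ((iy.const_mul θ).add (i3.div_const _)).add (i5.const_mul _)
  have hmain := integral_mono_ae iA.integral_prod_right iR.integral_prod_right (by
    filter_upwards [hsol] with ω hω
    exact pathwise w z v δ (Fl ω) (X ω) hω.1 hω.2 hT hθ)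
  rw [← integral_prod_symm _ iA, ← integral_prod_symm _ iR, integral_prod _ iA] at hmain
  have eA : ∫ s, ∫ ω, (T - s) * δ *
      ⟪((Fl ω).shift (X ω s)).1 0, Gop w z ((Fl ω).shift (X ω s)) 0⟫ ∂P ∂κ = δ * σ * T ^ 2 / 2 := by
    have e1 : ∫ s, ∫ ω, (T - s) * δ *
      ⟪((Fl ω).shift (X ω s)).1 0, Gop w z ((Fl ω).shift (X ω s)) 0⟫ ∂P ∂κ =
      ∫ s in Ioc 0 T, (T - s) * δ * σ := by
      refine setIntegral_congr_fun measurableSet_Ioc fun s hs => ?_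
      simp only
      rw [integral_const_mul, v1 s hs.1.le, h2]
    rw [e1, ← intervalIntegral.integral_of_le hT.le]
    simp_rw [mul_assoc]
    rw [intervalIntegral.integral_mul_const, intervalIntegral.integral_sub (by simp) (by simp)]
    simp only [intervalIntegral.integral_const, integral_id, smul_eq_mul]
    ring
  have eR : ∫ p, (θ * ‖X p.2 p.1 - p.1 • v‖ ^ 2 +
      ‖Gop w z ((Fl p.2).shift (X p.2 p.1)) 0‖ ^ 2 / (2 * θ) +
        T ^ 2 / (2 * θ) * ‖mD w z v δ ((Fl p.2).shift (X p.2 p.1))‖ ^ 2) ∂(κ.prod P) =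
      θ * (∫ s in (0:ℝ)..T, ∫ ω, ‖X ω s - s • v‖ ^ 2 ∂P) +
      T * (∫ f : Fld d, ‖Gop w z f 0‖ ^ 2 ∂(P.map Fl)) / (2 * θ) +
      T ^ 2 / (2 * θ) * (T * ∫ f, ‖mD w z v δ f‖ ^ 2 ∂(P.map Fl)) := by
    have g3 : ∫ p : ℝ × Ω, ‖Gop w z ((Fl p.2).shift (X p.2 p.1)) 0‖ ^ 2 ∂(κ.prod P) =
        T * (∫ f : Fld d, ‖Gop w z f 0‖ ^ 2 ∂(P.map Fl)) := by
      rw [integral_prod _ i3, setIntegral_congr_fun measurableSet_Ioc (fun s hs => v3 s hs.1.le)]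
      simp [hT.le]
    have g5 : ∫ p : ℝ × Ω, ‖mD w z v δ ((Fl p.2).shift (X p.2 p.1))‖ ^ 2 ∂(κ.prod P) =
        T * (∫ f : Fld d, ‖mD w z v δ f‖ ^ 2 ∂(P.map Fl)) := by
      rw [integral_prod _ i5, setIntegral_congr_fun measurableSet_Ioc (fun s hs => v5 s hs.1.le)]
      simp [hT.le]
    have iS : Integrable (fun p : ℝ × Ω => θ * ‖X p.2 p.1 - p.1 • v‖ ^ 2 +
        ‖Gop w z ((Fl p.2).shift (X p.2 p.1)) 0‖ ^ 2 / (2 * θ)) (κ.prod P) :=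
      (iy.const_mul θ).add (i3.div_const _)
    rw [integral_add iS (i5.const_mul _),
      integral_add (iy.const_mul θ) (i3.div_const _), integral_const_mul, integral_const_mul,
      integral_div, g3, g5, integral_prod _ iy, intervalIntegral.integral_of_le hT.le]
  rw [eA, eR] at hmain
  refine hmain.trans ?_
  have b1 : T * (∫ f : Fld d, ‖Gop w z f 0‖ ^ 2 ∂(P.map Fl)) / (2 * θ) ≤ T * σ / (2 * θ) := by
    gcongr
  have b2 : T ^ 2 / (2 * θ) * (T * ∫ f, ‖mD w z v δ f‖ ^ 2 ∂(P.map Fl)) ≤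
      T ^ 2 / (2 * θ) * (T * (C * σ / T ^ 2)) := by
    gcongr
  have b3 : T ^ 2 / (2 * θ) * (T * (C * σ / T ^ 2)) = T * σ * C / (2 * θ) := by
    field_simp
  have b4 : T * σ * (1 + C) / (2 * θ) = T * σ / (2 * θ) + T * σ * C / (2 * θ) := by ring
  linarith

end
end

/-- In the setting of a particle in the flow `v + δF`, with the Gaussian,
centered, homogeneous, divergence-free field `F` whose covariance has the power spectrum
determined by `a` and `α`, assume `1/2 < α < 1` and set `H = 1/(2α)`. For every `t > 0`
and `ρ > 0`, with `T_δ⁺ = t^{1+ρ} δ^{-2H(1+ρ)}`, the Cesàro limit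
`lim_{δ→0+} Y_δ(T_δ⁺)/T_δ⁺ = +∞`, where `Y_δ(T) = ∫₀^T E|y_δ(s)|² ds` and
`y_δ(s) = X_δ(s) - vs`. -/
theorem stmt0 (d : ℕ) (hd : 2 ≤ d)
    (α : ℝ) (hα1 : 1 / 2 < α) (hα2 : α < 1)
    (K : ℝ) (hK : 0 < K)
    (a : ℝ → ℝ)
    (ha_nonneg : ∀ r : ℝ, 0 ≤ r → 0 ≤ a r)
    (ha_bdd : ∃ M : ℝ, ∀ r : ℝ, 0 ≤ r → a r ≤ M)
    (ha_meas : Measurable a)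
    (ha_supp : ∀ r : ℝ, K < r → a r = 0)
    (ha_cont : ContinuousAt a 0)
    (ha_one : a 0 = 1)
    (v : EuclideanSpace ℝ (Fin d)) (hv : ‖v‖ = 1)
    (Ω : Type*) [MeasurableSpace Ω] (P : Measure Ω) [IsProbabilityMeasure P]
    (F : Ω → EuclideanSpace ℝ (Fin d) → EuclideanSpace ℝ (Fin d))
    (hF_meas : Measurable (Function.uncurry F))
    (hF_reg : ∀ᵐ ω ∂P, ContDiff ℝ 1 (F ω) ∧
      ∀ x : EuclideanSpace ℝ (Fin d),
        ∑ i : Fin d, fderiv ℝ (F ω) x (EuclideanSpace.single i 1) i = 0)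
    (hF_gauss : ∀ (N : ℕ) (x c : Fin N → EuclideanSpace ℝ (Fin d)),
      Measure.map (fun ω => ∑ j : Fin N, ⟪c j, F ω (x j)⟫) P =
        gaussianReal 0 (Real.toNNReal (∑ j : Fin N, ∑ l : Fin N,
          ∑ i : Fin d, ∑ i' : Fin d,
            c j i * covEntry d α a (x j - x l) i i' * c l i')))
    (X : ℝ → Ω → ℝ → EuclideanSpace ℝ (Fin d))
    (hX_meas : ∀ δ ∈ Ioc (0:ℝ) 1, Measurable (Function.uncurry (X δ)))
    (hX_sol : ∀ δ ∈ Ioc (0:ℝ) 1, ∀ᵐ ω ∂P, X δ ω 0 = 0 ∧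
      ∀ s : ℝ, 0 ≤ s → HasDerivAt (X δ ω) (v + δ • F ω (X δ ω s)) s)
    (hy_int : ∀ δ ∈ Ioc (0:ℝ) 1, ∀ s : ℝ,
      Integrable (fun ω => ‖X δ ω s - s • v‖ ^ 2) P)
    (hy_loc : ∀ δ ∈ Ioc (0:ℝ) 1, ∀ T : ℝ,
      IntegrableOn (fun s => ∫ ω, ‖X δ ω s - s • v‖ ^ 2 ∂P) (Icc 0 T) volume)
    (t ρ : ℝ) (ht : 0 < t) (hρ : 0 < ρ) :
    Tendsto (fun δ : ℝ =>
        (∫ s in (0:ℝ)..(t ^ (1 + ρ) * δ ^ (-2 * (1 / (2 * α)) * (1 + ρ))),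
            ∫ ω, ‖X δ ω s - s • v‖ ^ 2 ∂P) /
          (t ^ (1 + ρ) * δ ^ (-2 * (1 / (2 * α)) * (1 + ρ))))
      (nhdsWithin 0 (Ioi 0)) atTop := by
  classical
  obtain ⟨Fl, hFl, hFlF, hG⟩ := exists_lift P F hF_meas hF_reg hF_gauss
  have hprob : IsProbabilityMeasure (P.map Fl) := Measure.isProbabilityMeasure_map hFl.aemeasurable
  obtain ⟨C, c, T0, hC, hc, hT0, hmom⟩ := moments hd hα1 hα2 hK ha_nonneg ha_bdd ha_meas ha_supp
    ha_cont ha_one hv hG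
  have hα0 : 0 < α := by linarith
  have htp : 0 < t ^ (1 + ρ) := Real.rpow_pos_of_pos ht _
  have hexp : -2 * (1 / (2 * α)) * (1 + ρ) < 0 := by
    have : 0 < 1 / (2 * α) * (1 + ρ) := by positivity
    linarith
  have hTlim : Tendsto (fun δ : ℝ => t ^ (1 + ρ) * δ ^ (-2 * (1 / (2 * α)) * (1 + ρ)))
      (nhdsWithin 0 (Ioi 0)) atTop :=
    (tendsto_rpow_neg_nhdsGT_zero hexp).const_mul_atTop htp
  have hlim : Tendsto (fun δ : ℝ => c / (8 * (1 + C)) * (t ^ (1 + ρ)) ^ (2 * α) * δ ^ (-2 * ρ))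
      (nhdsWithin 0 (Ioi 0)) atTop :=
    (tendsto_rpow_neg_nhdsGT_zero (by linarith)).const_mul_atTop (by positivity)
  refine tendsto_atTop_mono' _ ?_ hlim
  filter_upwards [hTlim.eventually_ge_atTop T0, Ioc_mem_nhdsGT (zero_lt_one (α := ℝ))] with δ hδT hδ
  have hδ0 : 0 < δ := hδ.1
  have hkey : δ ^ 2 * (t ^ (1 + ρ) * δ ^ (-2 * (1 / (2 * α)) * (1 + ρ))) ^ 2 *
      (t ^ (1 + ρ) * δ ^ (-2 * (1 / (2 * α)) * (1 + ρ))) ^ (-(2 - 2 * α)) =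
      (t ^ (1 + ρ)) ^ (2 * α) * δ ^ (-2 * ρ) := by
    have hTp : 0 < t ^ (1 + ρ) * δ ^ (-2 * (1 / (2 * α)) * (1 + ρ)) := by positivity
    rw [mul_assoc, ← Real.rpow_natCast (t ^ (1 + ρ) * δ ^ (-2 * (1 / (2 * α)) * (1 + ρ))) 2,
      ← Real.rpow_add hTp, Real.mul_rpow htp.le (by positivity), ← Real.rpow_mul hδ0.le,
      ← Real.rpow_natCast δ 2, mul_left_comm, ← Real.rpow_add hδ0]
    congr 2
    · push_cast; ring
    · push_cast; field_simp; ring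
  generalize t ^ (1 + ρ) * δ ^ (-2 * (1 / (2 * α)) * (1 + ρ)) = T at hδT hkey ⊢
  have hT : 0 < T := by linarith
  obtain ⟨M, w, z, σ, hσ, h1, h2, h3, h4, h56⟩ := hmom T hδT
  obtain ⟨h5, h6⟩ := h56 δ hδ
  have hsol : ∀ᵐ ω ∂P, X δ ω 0 = 0 ∧
      ∀ s, 0 ≤ s → HasDerivAt (X δ ω) (drift v δ (Fl ω) (X δ ω s)) s := by
    filter_upwards [hX_sol δ hδ, hFlF] with ω h hf
    refine ⟨h.1, fun s hs => ?_⟩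
    have := h.2 s hs
    rw [← hf] at this
    exact this
  have hXm := hX_meas δ hδ
  have hL : ∀ s, 0 ≤ s → P.map (fun ω => (Fl ω).shift (X δ ω s)) = P.map Fl := fun s hs =>
    lagr_eq v δ hs P Fl hFl (fun x => hG.shift_inv x) (X δ) (hXm.comp measurable_prodMk_right) hsol
  have hσ0 : 0 < σ := lt_of_lt_of_le (by positivity) hσ
  have hθ : 0 < 2 * (1 + C) / (δ * T) := by positivity
  have hm := main_est hFl hXm hL hsol (hy_int δ hδ) (hy_loc δ hδ) hT hθ h1 h2 h3 h4 h5 h6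
  generalize (∫ s in (0:ℝ)..T, ∫ ω, ‖X δ ω s - s • v‖ ^ 2 ∂P) = Y at hm ⊢
  have hC1 : 0 < 1 + C := by linarith
  have e1 : T * σ * (1 + C) / (2 * (2 * (1 + C) / (δ * T))) = δ * σ * T ^ 2 / 4 := by
    field_simp; ring
  rw [e1] at hm
  have e2 : 2 * (1 + C) / (δ * T) * Y = (2 * (1 + C) / δ) * (Y / T) := by
    field_simp
  rw [e2] at hm
  have h7 : δ ^ 2 * T ^ 2 * σ / (8 * (1 + C)) ≤ Y / T := by
    have h8 : δ * σ * T ^ 2 / 4 ≤ (2 * (1 + C) / δ) * (Y / T) := by linarith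
    have h9 := mul_le_mul_of_nonneg_left h8 (show 0 ≤ δ / (2 * (1 + C)) by positivity)
    have e3 : δ / (2 * (1 + C)) * ((2 * (1 + C) / δ) * (Y / T)) = Y / T := by
      field_simp
    have e4 : δ / (2 * (1 + C)) * (δ * σ * T ^ 2 / 4) = δ ^ 2 * T ^ 2 * σ / (8 * (1 + C)) := by
      field_simp; ring
    rw [e3, e4] at h9
    exact h9
  refine le_trans ?_ h7
  calc c / (8 * (1 + C)) * (t ^ (1 + ρ)) ^ (2 * α) * δ ^ (-2 * ρ)
      = δ ^ 2 * T ^ 2 * (c * T ^ (-(2 - 2 * α))) / (8 * (1 + C)) := by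
        rw [mul_assoc, ← hkey]; ring
    _ ≤ δ ^ 2 * T ^ 2 * σ / (8 * (1 + C)) := by gcongr
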